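/- arXiv:2203.12704 — 2 statements merged into one kernel-verified Lean document; each statement's English description precedes it below -/
import Mathlib

section
/- Let G be a finite group of odd order and let p be an odd prime with p ≡ 2 (mod 3) such that (p-1)/2 is odd. If acd(G) < 3(p-1)/(p+3), then G is p-nilpotent. -/
/-!
Write `G'` for the commutator subgroup and `c = 3 * (p - 1) / (p + 3)`, so that `c < 3`. In a group
of odd order all character degrees are odd and only the trivial irreducible character is real
(`exists_odd_deg`, `eq_one_of_real`), both by pairing `g` with `g⁻¹`. Hence nonlinear degrees are
at least `3`. If `acd G < c`, summing `χ 1 - c` over the linear characters and over the twist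
orbits of any pairwise twist-inequivalent nonlinear characters `χ` gives
`∑ (χ 1 - c) / t χ < c - 1`, where `t χ` (`twistStab`) is the number of linear characters fixing
`χ` (`sum_div_twistStab_lt`). A nonlinear `χ` is not a twist of its dual, so
`2 * (χ 1 - c) / t χ < c - 1` as well. The condition `acd G < c` passes to quotients by normal
subgroups inside `G'`.

Suppose `H * G' = G` and `χ` is irreducible with an `H`-fixed vector. Each of the `t χ` linear
characters fixing `χ` is then a weight of `H`, so `[H, H]` fixes a space of dimension at least
`t χ`. The inequality for `χ` and its dual gives `χ 1 < t χ + 3`, and since odd-order groups have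
no irreducible representation of degree two, `[H, H]` acts trivially. Applied to the constituents
of the functions on `G ⧸ H`, this puts the normal closure of `[H, H]` inside `H`
(`normalClosure_commutator_le`).

The theorem is proved by induction on `|G|`. Let `N ≤ G'` be minimal normal in `G`; then `G ⧸ N` is
`p`-nilpotent, and so is `G` if `p` does not divide `|N|`. Otherwise take for `H` the normalizer of
a Sylow `p`-subgroup of `N`. The Frattini argument, the preceding paragraph and Burnside's transfer
theorem show that `N` is a `p`-group (`isPGroup_of_minimal`), hence abelian; solubility of groups
of odd order is not needed. A second Frattini argument shows that `G` is `p`-nilpotent or `N` has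
a complement `H` (`hasNormalPComplement_or_exists_complement`).

In the complemented case each `G`-orbit of `d` nontrivial characters of `N` yields an irreducible
monomial character of degree `d` with an `H`-fixed vector, so its `t` is at most `d`, and distinct
orbits give twist-inequivalent characters. Thus `∑ (1 - c / d) < c - 1` over all such orbits and
`2 * (1 - c / d) < c - 1` for each. With `s = (p - 1) / 2` the second inequality forces `d < s`.
If `|N| ≥ p ^ 2` there are at least `2 * (p + 1)` orbits, each of size at least `3`; if `|N| = p`,
then `d` divides the odd number `s`, which is prime to `3`, so `5 ≤ d ≤ s / 3` and there are at
least six orbits. Either way the first inequality fails (`orbit_sizes_absurd`).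
-/

/-- The set of irreducible complex characters of `G`. -/
noncomputable def Irr (G : Type) [Group G] : Set (G → ℂ) :=
  {χ | ∃ V : FDRep ℂ G, CategoryTheory.Simple V ∧ χ = FDRep.character V}

/-- A group `G` has a normal `p`-complement: a normal subgroup of order coprime
to `p` whose index is a power of `p`. -/
def HasNormalPComplement (G : Type) [Group G] (p : ℕ) : Prop :=
  ∃ N : Subgroup G, N.Normal ∧ Nat.Coprime (Nat.card N) p ∧ ∃ n : ℕ, N.index = p ^ n

/-- The average of the degrees of the irreducible complex characters of `G`. -/
noncomputable def acd (G : Type) [Group G] : ℝ :=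
  (∑ᶠ χ ∈ Irr G, (χ 1).re) / (Nat.card (Irr G))

/-! ### Irreducible characters -/

section Characters

variable {G : Type} [Group G]

lemma isIntegral_trace_of_pow_eq_one {V : Type} [AddCommGroup V] [Module ℂ V]
    [FiniteDimensional ℂ V] (f : Module.End ℂ V) {n : ℕ} (hn : 0 < n) (hf : f ^ n = 1) :
    IsIntegral ℤ (LinearMap.trace ℂ V f) := by
  classical
  let b := Module.finBasis ℂ V
  rw [LinearMap.trace_eq_matrix_trace ℂ b, Matrix.trace_eq_sum_roots_charpoly]
  apply IsIntegral.multiset_sum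
  intro z hz
  refine ⟨Polynomial.X ^ n - 1, Polynomial.monic_X_pow_sub_C 1 hn.ne', ?_⟩
  have hz' : f.HasEigenvalue z := by
    rw [LinearMap.charpoly_toMatrix] at hz
    exact (Module.End.hasEigenvalue_iff_isRoot_charpoly f z).2 (Polynomial.isRoot_of_mem_roots hz)
  obtain ⟨v, hv⟩ := hz'.exists_hasEigenvector
  have := hv.pow_apply n
  rw [hf] at this
  have h1 : (z ^ n - 1) • v = 0 := by
    rw [sub_smul, ← this]; simp
  rcases smul_eq_zero.1 h1 with h | h
  · simpa using h
  · exact absurd h hv.2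

variable [Fintype G]

/-- For irreducibility of a character only its norm matters. -/
lemma mem_Irr_of_norm {V : Type} [AddCommGroup V] [Module ℂ V] [FiniteDimensional ℂ V]
    (ρ : Representation ℂ G V)
    (h : ∑ g, ρ.character g * ρ.character g⁻¹ = Nat.card G) : ρ.character ∈ Irr G := by
  refine ⟨FDRep.of ρ, ?_, ?_⟩
  · rw [FDRep.simple_iff_char_is_norm_one]
    exact h
  · rfl

lemma mem_Irr_of_isIrreducible {V : Type} [AddCommGroup V] [Module ℂ V] [FiniteDimensional ℂ V]
    (ρ : Representation ℂ G V) [ρ.IsIrreducible] : ρ.character ∈ Irr G := by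
  apply mem_Irr_of_norm
  have hne : (Nat.card G : ℂ) ≠ 0 := by simp
  let _ := invertibleOfNonzero hne
  have := ρ.char_orthonormal ρ
  rw [if_pos ⟨Representation.Equiv.refl ρ⟩] at this
  field_simp at this
  exact this

lemma exists_rep_of_mem_Irr {χ : G → ℂ} (h : χ ∈ Irr G) :
    ∃ (V : Type) (_ : AddCommGroup V) (_ : Module ℂ V) (_ : FiniteDimensional ℂ V)
      (ρ : Representation ℂ G V), χ = ρ.character ∧
      ∑ g, ρ.character g * ρ.character g⁻¹ = Nat.card G := by
  obtain ⟨V, hV, rfl⟩ := h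
  exact ⟨V, inferInstance, inferInstance, inferInstance, V.ρ, rfl,
    (FDRep.simple_iff_char_is_norm_one V).1 hV⟩

open Classical in
lemma Irr_orthogonality {χ ψ : G → ℂ} (hχ : χ ∈ Irr G) (hψ : ψ ∈ Irr G) :
    ∑ g, χ g * ψ g⁻¹ = if χ = ψ then (Nat.card G : ℂ) else 0 := by
  obtain ⟨V, hV, rfl⟩ := hχ
  obtain ⟨W, hW, rfl⟩ := hψ
  split_ifs with h
  · rw [← h]; exact (FDRep.simple_iff_char_is_norm_one V).1 hV
  · have hne : (Nat.card G : ℂ) ≠ 0 := by simp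
    let _ := invertibleOfNonzero hne
    have := FDRep.char_orthonormal V W
    rw [if_neg (fun ⟨i⟩ => h (FDRep.char_iso i))] at this
    simpa using this

lemma Irr_finite : (Irr G).Finite := by
  classical
  have hli : LinearIndependent ℂ (fun χ : Irr G => (χ : G → ℂ)) := by
    rw [linearIndependent_iff']
    intro s a ha χ hχ
    have h1 : ∑ g, (∑ ψ ∈ s, a ψ • (ψ : G → ℂ)) g * (χ : G → ℂ) g⁻¹ = a χ * Nat.card G := by
      simp only [Finset.sum_apply, Pi.smul_apply, smul_eq_mul, Finset.sum_mul]
      rw [Finset.sum_comm]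
      simp only [mul_assoc, ← Finset.mul_sum]
      simp only [fun ψ : Irr G => Irr_orthogonality ψ.2 χ.2]
      rw [Finset.sum_eq_single χ]
      · simp
      · intro b _ hb
        rw [if_neg (fun h => hb (Subtype.ext h)), mul_zero]
      · intro h; exact absurd hχ h
    rw [ha] at h1
    simpa using h1.symm
  exact hli.setFinite

end Characters

/-! ### Parity of degrees and of real characters -/

section Parity

variable {G : Type} [Group G] [Fintype G]

lemma isIntegral_of_mem_Irr {χ : G → ℂ} (h : χ ∈ Irr G) (g : G) : IsIntegral ℤ (χ g) := by
  obtain ⟨V, _, _, _, ρ, rfl, -⟩ := exists_rep_of_mem_Irr h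
  refine isIntegral_trace_of_pow_eq_one (ρ g) (Nat.card_pos (α := G)) ?_
  rw [← map_pow, pow_card_eq_one', map_one]

/-- In a group of odd order the nonidentity elements fall into pairs `{g, g⁻¹}`, so an
inversion-invariant sum of algebraic integers is congruent modulo `2` to its term at `1`. -/
lemma parity_of_inv_invariant (hG : Odd (Nat.card G)) (f : G → ℂ)
    (hintegral : ∀ g, IsIntegral ℤ (f g)) (hinv : ∀ g, f g⁻¹ = f g) (a b : ℕ)
    (ha : ∑ g, f g = a) (hb : f 1 = b) : a % 2 = b % 2 := by
  classical
  let R := integralClosure ℤ ℂ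
  let I : Ideal R := Ideal.span {2}
  let F : G → R := fun g => ⟨f g, hintegral g⟩
  have h2 : (2 : R ⧸ I) = 0 := by
    have : ((2 : R) : R ⧸ I) = 0 := Ideal.Quotient.eq_zero_iff_mem.2
      (Ideal.subset_span rfl)
    exact this
  have hsum : ∑ g ∈ Finset.univ.erase (1 : G), (Ideal.Quotient.mk I (F g)) = 0 := by
    refine Finset.sum_involution (fun g _ => g⁻¹) ?_ ?_ ?_ ?_
    · intro g _
      have : F g⁻¹ = F g := Subtype.ext (hinv g)
      rw [this, ← two_mul, h2, zero_mul]
    · intro g hg _ h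
      have hg2 : g ^ 2 = 1 := by rw [pow_two]; nth_rw 1 [← h]; simp
      have : g = 1 := by
        have ho : orderOf g ∣ 2 := orderOf_dvd_of_pow_eq_one hg2
        have ho' : orderOf g ∣ Nat.card G := orderOf_dvd_natCard g
        have hc : Nat.Coprime 2 (Nat.card G) := hG.coprime_two_left
        exact orderOf_eq_one_iff.1 (Nat.eq_one_of_dvd_coprimes hc ho ho')
      exact (Finset.mem_erase.1 hg).1 this
    · intro g hg
      simpa using hg
    · intro g _; simp
  rw [← map_sum, Ideal.Quotient.eq_zero_iff_mem, Ideal.mem_span_singleton] at hsum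
  obtain ⟨z, hz⟩ := hsum
  have hz' := congrArg (Subtype.val) hz
  have hz2 : (a : ℂ) - b = 2 * (z : ℂ) := by
    rw [← ha, ← hb, ← Finset.sum_erase_eq_sub (Finset.mem_univ _)]
    have : ((∑ g ∈ Finset.univ.erase (1 : G), F g : R) : ℂ)
      = ∑ g ∈ Finset.univ.erase (1 : G), f g := by
      rw [AddSubmonoidClass.coe_finsetSum]
    rw [← this, hz]
    rfl
  have hzi : IsIntegral ℤ (algebraMap ℚ ℂ (((a : ℚ) - b) / 2)) := by
    have : (algebraMap ℚ ℂ (((a : ℚ) - b) / 2)) = z := by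
      simp only [map_div₀, map_sub, map_natCast, map_ofNat, hz2]; ring
    rw [this]; exact z.2
  rw [isIntegral_algebraMap_iff (algebraMap ℚ ℂ).injective] at hzi
  obtain ⟨m, hm⟩ := IsIntegrallyClosed.isIntegral_iff.1 hzi
  have : (a : ℤ) - b = 2 * m := by
    have : ((a : ℚ) - b) = 2 * m := by
      have : (m : ℚ) = ((a : ℚ) - b) / 2 := by simpa using hm
      rw [this]; ring
    exact_mod_cast this
  omega

lemma exists_deg {χ : G → ℂ} (h : χ ∈ Irr G) : ∃ d : ℕ, χ 1 = d := by
  obtain ⟨V, _, _, _, ρ, rfl, -⟩ := exists_rep_of_mem_Irr h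
  exact ⟨_, ρ.char_one⟩

lemma Irr_norm {χ : G → ℂ} (h : χ ∈ Irr G) : ∑ g, χ g * χ g⁻¹ = Nat.card G := by
  rw [Irr_orthogonality h h, if_pos rfl]

/-- Degrees in a group of odd order are odd, by the parity of `∑ g, χ g * χ g⁻¹ = |G|`; this
avoids the divisibility of `|G|` by the degree. -/
lemma exists_odd_deg (hG : Odd (Nat.card G)) {χ : G → ℂ} (h : χ ∈ Irr G) :
    ∃ d : ℕ, χ 1 = d ∧ Odd d := by
  obtain ⟨d, hd⟩ := exists_deg h
  refine ⟨d, hd, ?_⟩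
  have := parity_of_inv_invariant hG (fun g => χ g * χ g⁻¹)
    (fun g => (isIntegral_of_mem_Irr h g).mul (isIntegral_of_mem_Irr h _))
    (fun g => by simp [mul_comm]) (Nat.card G) (d * d) (Irr_norm h) (by simp [hd])
  rw [Nat.odd_iff.1 hG] at this
  have : Odd (d * d) := Nat.odd_iff.2 this.symm
  exact (Nat.odd_mul.1 this).1

/-! ### Linear characters and twisting -/

/-- Multiplication of a function by a linear character. -/
def twist (l : G →* ℂˣ) (χ : G → ℂ) : G → ℂ := fun g => (l g : ℂ) * χ g

omit [Fintype G] in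
@[simp] lemma twist_apply (l : G →* ℂˣ) (χ : G → ℂ) (g : G) : twist l χ g = (l g : ℂ) * χ g := rfl

/-- A linear character as a one-dimensional representation. -/
def linRep (l : G →* ℂˣ) : Representation ℂ G ℂ :=
  (Algebra.lsmul ℂ ℂ ℂ : ℂ →ₐ[ℂ] Module.End ℂ ℂ).toMonoidHom.comp ((Units.coeHom ℂ).comp l)

omit [Fintype G] in
lemma linRep_character (l : G →* ℂˣ) : (linRep l).character = fun g => (l g : ℂ) := by
  ext g
  have : linRep l g = (l g : ℂ) • LinearMap.id := by
    ext; simp [linRep]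
  rw [Representation.character, this, map_smul, LinearMap.trace_id]
  simp

omit [Fintype G] in
lemma lin_mul_inv (l : G →* ℂˣ) (g : G) : (l g : ℂ) * (l g⁻¹ : ℂ) = 1 := by
  rw [← Units.val_mul, ← map_mul]; simp

lemma twist_mem_Irr (l : G →* ℂˣ) {χ : G → ℂ} (h : χ ∈ Irr G) : twist l χ ∈ Irr G := by
  obtain ⟨V, _, _, _, ρ, rfl, hρ⟩ := exists_rep_of_mem_Irr h
  have hch : (Representation.tprod (linRep l) ρ).character = twist l ρ.character := by
    rw [Representation.char_tensor, linRep_character]; rfl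
  rw [← hch]
  apply mem_Irr_of_norm
  rw [hch, ← hρ]
  refine Finset.sum_congr rfl fun g _ => ?_
  simp only [twist_apply]
  rw [mul_mul_mul_comm, lin_mul_inv, one_mul]

lemma dual_mem_Irr {χ : G → ℂ} (h : χ ∈ Irr G) : (fun g => χ g⁻¹) ∈ Irr G := by
  obtain ⟨V, _, _, _, ρ, rfl, hρ⟩ := exists_rep_of_mem_Irr h
  have hch : ρ.dual.character = fun g => ρ.character g⁻¹ := by
    ext g; exact ρ.char_dual g
  rw [← hch]
  apply mem_Irr_of_norm
  rw [hch, ← hρ]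
  refine Finset.sum_congr rfl fun g _ => ?_
  simp [mul_comm]

lemma lin_mem_Irr (l : G →* ℂˣ) : (fun g => (l g : ℂ)) ∈ Irr G := by
  rw [← linRep_character]
  apply mem_Irr_of_norm
  rw [linRep_character]
  simp

omit [Fintype G] in
/-- A one-dimensional representation is scalar multiplication by a linear character. -/
lemma exists_lin_of_finrank_eq_one {V : Type} [AddCommGroup V] [Module ℂ V]
    [FiniteDimensional ℂ V] (ρ : Representation ℂ G V) (h1 : Module.finrank ℂ V = 1) :
    ∃ l : G →* ℂˣ, ∀ g v, ρ g v = (l g : ℂ) • v := by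
  have : Nontrivial V := Module.nontrivial_of_finrank_pos (R := ℂ) (by omega)
  obtain ⟨v, hv⟩ := exists_ne (0 : V)
  have hs : ∀ w : V, ∃ c : ℂ, c • v = w := (finrank_eq_one_iff_of_nonzero' v hv).1 h1
  choose c hc using fun g => hs (ρ g v)
  have hsc : ∀ g w, ρ g w = c g • w := by
    intro g w
    obtain ⟨a, rfl⟩ := hs w
    rw [map_smul, ← hc, smul_comm]
  have hinj : Function.Injective (fun a : ℂ => a • v) := smul_left_injective ℂ hv
  let m : G →* ℂ :=
    { toFun := c
      map_one' := hinj (by simp [hc])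
      map_mul' := fun a b => hinj (by
        change c (a * b) • v = (c a * c b) • v
        rw [hc, map_mul, Module.End.mul_apply, hsc b, hsc a, smul_smul]) }
  exact ⟨m.toHomUnits, fun g w => hsc g w⟩

lemma exists_lin_of_deg_one {χ : G → ℂ} (h : χ ∈ Irr G) (h1 : χ 1 = 1) :
    ∃ l : G →* ℂˣ, χ = fun g => (l g : ℂ) := by
  obtain ⟨V, _, _, _, ρ, rfl, -⟩ := exists_rep_of_mem_Irr h
  rw [ρ.char_one] at h1
  have h1 : Module.finrank ℂ V = 1 := by exact_mod_cast h1
  obtain ⟨l, hl⟩ := exists_lin_of_finrank_eq_one ρ h1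
  refine ⟨l, funext fun g => ?_⟩
  have : ρ g = (l g : ℂ) • LinearMap.id := by
    ext v; simp [hl]
  rw [Representation.character, this, map_smul, LinearMap.trace_id, h1]
  simp

lemma three_le_deg (hG : Odd (Nat.card G)) {χ : G → ℂ} (h : χ ∈ Irr G) (h1 : χ 1 ≠ 1) :
    3 ≤ (χ 1).re := by
  obtain ⟨d, hd, hodd⟩ := exists_odd_deg hG h
  rw [hd] at h1 ⊢
  have : d ≠ 1 := by rintro rfl; simp at h1
  have : 3 ≤ d := by obtain ⟨k, rfl⟩ := hodd; omega
  simpa using (by exact_mod_cast this : (3 : ℝ) ≤ d)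

/-- The trivial character is the only real irreducible character of a group of odd order. -/
lemma eq_one_of_real (hG : Odd (Nat.card G)) {χ : G → ℂ} (h : χ ∈ Irr G)
    (hr : ∀ g, χ g⁻¹ = χ g) : χ = fun _ => 1 := by
  by_contra hne
  have h1 : (fun _ => 1 : G → ℂ) ∈ Irr G := by simpa using lin_mem_Irr (1 : G →* ℂˣ)
  have h0 := Irr_orthogonality h h1
  rw [if_neg hne] at h0
  obtain ⟨d, hd, hodd⟩ := exists_odd_deg hG h
  have := parity_of_inv_invariant hG χ (isIntegral_of_mem_Irr h) hr 0 d (by simpa using h0) hd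
  rw [Nat.odd_iff.1 hodd] at this
  omega

/-- The dual of a nonlinear irreducible character is never one of its twists: since the group of linear
characters has odd exponent, one could otherwise twist it into a real character. -/
lemma dual_ne_twist (hG : Odd (Nat.card G)) {χ : G → ℂ} (h : χ ∈ Irr G) (h1 : χ 1 ≠ 1)
    (l : G →* ℂˣ) : (fun g => χ g⁻¹) ≠ twist l χ := by
  intro heq
  have hl : ∀ g, l g ^ Nat.card G = 1 := fun g => by
    rw [← map_pow, pow_card_eq_one', map_one]
  obtain ⟨k, hk⟩ := hG
  -- `m` is a square root of `l`, because `|G| = 2 * k + 1` kills `l`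
  let m := l ^ (k + 1)
  have hmg : ∀ g, (l g : ℂ) = m g * m g := fun g => by
    rw [← Units.val_mul, show m g = l g ^ (k + 1) from rfl, ← pow_add,
      show k + 1 + (k + 1) = (2 * k + 1) + 1 by ring, ← hk, pow_succ, hl, one_mul]
  have hreal := eq_one_of_real ⟨k, hk⟩ (twist_mem_Irr m h) (by
    intro g
    have := congrFun heq g
    simp only [twist_apply] at this ⊢
    rw [this, hmg, ← mul_assoc, ← mul_assoc, mul_comm (m g⁻¹ : ℂ), lin_mul_inv, one_mul])
  have := congrFun hreal 1
  simp at this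
  exact h1 this

end Parity

/-! ### Consequences of a small average degree -/

section Average

variable {G : Type} [Group G] [Fintype G]

omit [Fintype G] in
lemma lin_coe_injective :
    Function.Injective (fun (l : G →* ℂˣ) (g : G) => (l g : ℂ)) := by
  intro a b h
  ext g
  exact congrFun h g

lemma finite_lin : Finite (G →* ℂˣ) := by
  have := (Irr_finite (G := G)).to_subtype
  refine Finite.of_injective (fun l => (⟨_, lin_mem_Irr l⟩ : Irr G)) fun a b h => ?_
  exact lin_coe_injective (congrArg Subtype.val h)

/-- The number of linear characters which fix `χ` under multiplication. -/
noncomputable def twistStab (χ : G → ℂ) : ℕ := Nat.card {l : G →* ℂˣ // twist l χ = χ}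

lemma twistStab_pos (χ : G → ℂ) : 0 < twistStab χ := by
  have := finite_lin (G := G)
  have : Nonempty {l : G →* ℂˣ // twist l χ = χ} := ⟨1, by ext; simp⟩
  exact Nat.card_pos

omit [Fintype G] in
lemma card_range_twist (χ : G → ℂ) :
    Nat.card (Set.range fun l : G →* ℂˣ => twist l χ) * twistStab χ = Nat.card (G →* ℂˣ) := by
  let _ : MulAction (G →* ℂˣ) (G → ℂ) :=
    { smul := twist
      one_smul := fun f => by ext; change twist 1 f _ = _; simp
      mul_smul := fun a b f => by ext; change twist _ f _ = twist a (twist b f) _; simp [mul_assoc] }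
  rw [← Nat.card_congr (MulAction.orbitProdStabilizerEquivGroup (G →* ℂˣ) χ), Nat.card_prod]
  rfl

lemma acd_lt_iff (c : ℝ) :
    acd G < c ↔ ∑ χ ∈ (Irr_finite (G := G)).toFinset, ((χ 1).re - c) < 0 := by
  have hpos : 0 < (Irr_finite (G := G)).toFinset.card := by
    refine Finset.card_pos.2 ⟨_, (Set.Finite.mem_toFinset _).2 (lin_mem_Irr (1 : G →* ℂˣ))⟩
  rw [acd, finsum_mem_eq_finite_toFinset_sum _ Irr_finite,
    Nat.card_eq_card_finite_toFinset Irr_finite, div_lt_iff₀ (by exact_mod_cast hpos),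
    Finset.sum_sub_distrib, Finset.sum_const, nsmul_eq_mul, sub_neg, mul_comm c]

/-- If the average degree of `G` is less than `c ≤ 3`, then the excess degrees over any set of
pairwise twist-inequivalent nonlinear characters, weighted by the sizes of their twist orbits, are
outweighed by the linear characters. -/
lemma sum_div_twistStab_lt (hG : Odd (Nat.card G)) {c : ℝ} (hc : c ≤ 3) (h : acd G < c)
    (X : Finset (G → ℂ)) (hX : ∀ χ ∈ X, χ ∈ Irr G ∧ χ 1 ≠ 1)
    (hdisj : ∀ χ ∈ X, ∀ ψ ∈ X, ∀ l : G →* ℂˣ, ψ = twist l χ → χ = ψ) :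
    ∑ χ ∈ X, ((χ 1).re - c) / twistStab χ < c - 1 := by
  classical
  have hfin := finite_lin (G := G)
  have _ := Fintype.ofFinite (G →* ℂˣ)
  rw [acd_lt_iff] at h
  let A : Finset (G → ℂ) := Finset.univ.image (fun (l : G →* ℂˣ) (g : G) => (l g : ℂ))
  let T : (G → ℂ) → Finset (G → ℂ) := fun χ => Finset.univ.image (fun l : G →* ℂˣ => twist l χ)
  have hTirr : ∀ χ ∈ X, ∀ ψ ∈ T χ, ψ ∈ Irr G ∧ ψ 1 = χ 1 := by
    intro χ hχ ψ hψ
    obtain ⟨l, -, rfl⟩ := Finset.mem_image.1 hψ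
    exact ⟨twist_mem_Irr l (hX χ hχ).1, by simp⟩
  have hAB : Disjoint A (X.biUnion T) := by
    rw [Finset.disjoint_left]
    intro ψ hA hB
    obtain ⟨l, -, rfl⟩ := Finset.mem_image.1 hA
    obtain ⟨χ, hχ, hB⟩ := Finset.mem_biUnion.1 hB
    apply (hX χ hχ).2
    rw [← (hTirr χ hχ _ hB).2]
    simp
  have hTd : ∀ χ ∈ X, ∀ ψ ∈ X, χ ≠ ψ → Disjoint (T χ) (T ψ) := by
    intro χ hχ ψ hψ hne
    rw [Finset.disjoint_left]
    intro f h1 h2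
    obtain ⟨l, -, rfl⟩ := Finset.mem_image.1 h1
    obtain ⟨m, -, hm⟩ := Finset.mem_image.1 h2
    apply hne
    refine hdisj χ hχ ψ hψ (m⁻¹ * l) ?_
    ext g
    have := congrFun hm g
    simp only [twist_apply] at this
    simp [mul_assoc, ← this]
  have hsub : A ∪ X.biUnion T ⊆ (Irr_finite (G := G)).toFinset := by
    intro ψ hψ
    rw [Set.Finite.mem_toFinset]
    rcases Finset.mem_union.1 hψ with hψ | hψ
    · obtain ⟨l, -, rfl⟩ := Finset.mem_image.1 hψ
      exact lin_mem_Irr l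
    · obtain ⟨χ, hχ, hB⟩ := Finset.mem_biUnion.1 hψ
      exact (hTirr χ hχ _ hB).1
  have hle := Finset.sum_le_sum_of_subset_of_nonneg (f := fun χ : G → ℂ => (χ 1).re - c) hsub (by
    intro ψ hψ hn
    rw [Set.Finite.mem_toFinset] at hψ
    have h1 : ψ 1 ≠ 1 := by
      intro h1
      obtain ⟨l, rfl⟩ := exists_lin_of_deg_one hψ h1
      exact hn (Finset.mem_union_left _ (Finset.mem_image_of_mem _ (Finset.mem_univ l)))
    linarith [three_le_deg hG hψ h1])
  rw [Finset.sum_union hAB, Finset.sum_biUnion hTd] at hle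
  have hL : (0 : ℝ) < Nat.card (G →* ℂˣ) := by exact_mod_cast Nat.card_pos
  have hA : ∑ χ ∈ A, ((χ 1).re - c) = Nat.card (G →* ℂˣ) * (1 - c) := by
    rw [Finset.sum_image (fun a _ b _ h => lin_coe_injective h)]
    simp [mul_sub]
  have hT : ∀ χ ∈ X, ∑ ψ ∈ T χ, ((ψ 1).re - c)
      = Nat.card (G →* ℂˣ) * (((χ 1).re - c) / twistStab χ) := by
    intro χ hχ
    rw [Finset.sum_congr rfl (fun ψ hψ => by rw [(hTirr χ hχ ψ hψ).2]), Finset.sum_const,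
      nsmul_eq_mul, ← card_range_twist χ]
    have : (T χ).card = Nat.card (Set.range fun l : G →* ℂˣ => twist l χ) := by
      rw [Nat.card_coe_set_eq, Set.ncard_eq_toFinset_card' _]
      congr 1
      ext; simp [T]
    rw [this]
    have := twistStab_pos χ
    push_cast
    field_simp
  rw [hA, Finset.sum_congr rfl hT, ← Finset.mul_sum, ← mul_add] at hle
  have := lt_of_le_of_lt hle h
  have := (mul_neg_iff.1 this).resolve_right (fun h => absurd h.1 hL.not_gt)
  linarith [this.2]

/-- The previous bound for a nonlinear character together with its dual, which is never one of
its twists. -/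
lemma two_mul_div_twistStab_lt (hG : Odd (Nat.card G)) {c : ℝ} (hc : c ≤ 3) (h : acd G < c)
    {χ : G → ℂ} (hχ : χ ∈ Irr G) (h1 : χ 1 ≠ 1) :
    2 * (((χ 1).re - c) / twistStab χ) < c - 1 := by
  classical
  let ψ : G → ℂ := fun g => χ g⁻¹
  have hne : χ ≠ ψ := fun e => dual_ne_twist hG hχ h1 1 (by
    rw [show (fun g => χ g⁻¹) = χ from e.symm]; ext; simp)
  have hst : twistStab ψ = twistStab χ := by
    have key : ∀ (f : G → ℂ) (l : G →* ℂˣ), twist l f = f →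
        twist l (fun g => f g⁻¹) = fun g => f g⁻¹ := by
      intro f l hf
      ext g
      have := congrFun hf g⁻¹
      simp only [twist_apply] at this ⊢
      nth_rw 1 [← this]
      rw [← mul_assoc, lin_mul_inv, one_mul]
    refine Nat.card_congr (Equiv.subtypeEquivRight fun l => ⟨fun h => ?_, key χ l⟩)
    simpa [ψ] using key ψ l h
  have := sum_div_twistStab_lt hG hc h {χ, ψ} (by
    intro f hf
    rcases Finset.mem_insert.1 hf with rfl | hf
    · exact ⟨hχ, h1⟩
    · rw [Finset.mem_singleton] at hf
      subst hf
      exact ⟨dual_mem_Irr hχ, by simpa [ψ] using h1⟩) (by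
    intro f hf f' hf' l hl
    simp only [Finset.mem_insert, Finset.mem_singleton] at hf hf'
    rcases hf with rfl | rfl <;> rcases hf' with rfl | rfl
    · rfl
    · exact absurd hl (dual_ne_twist hG hχ h1 l)
    · refine absurd ?_ (dual_ne_twist hG hχ h1 l⁻¹)
      ext g
      have := congrFun hl g
      simp only [twist_apply, ψ] at this ⊢
      rw [this, ← mul_assoc, MonoidHom.inv_apply, Units.inv_mul, one_mul]
    · rfl)
  rw [Finset.sum_pair hne, hst] at this
  have e : ψ 1 = χ 1 := by simp [ψ]
  rw [e] at this
  linarith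

/-- Passing to the quotient by a subgroup of the commutator subgroup only discards nonlinear
characters. -/
lemma acd_quotient_lt (hG : Odd (Nat.card G)) {c : ℝ} (hc : c ≤ 3) (h : acd G < c)
    (N : Subgroup G) [N.Normal] (hN : N ≤ commutator G) : acd (G ⧸ N) < c := by
  classical
  rw [acd_lt_iff] at h ⊢
  refine lt_of_le_of_lt ?_ h
  let F : (G ⧸ N → ℂ) → (G → ℂ) := fun χ g => χ (QuotientGroup.mk' N g)
  have hF : Function.Injective F := by
    intro a b hab
    ext x
    obtain ⟨g, rfl⟩ := QuotientGroup.mk'_surjective N x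
    exact congrFun hab g
  have hmem : ∀ χ ∈ Irr (G ⧸ N), F χ ∈ Irr G := by
    intro χ hχ
    obtain ⟨V, _, _, _, ρ, rfl, hρ⟩ := exists_rep_of_mem_Irr hχ
    have : F ρ.character = Representation.character (ρ.comp (QuotientGroup.mk' N)) := rfl
    rw [this]
    apply mem_Irr_of_norm
    rw [← this]
    have h2 : ∑ g : G, F ρ.character g * F ρ.character g⁻¹
      = ∑ g : G, (fun x : G ⧸ N => ρ.character x * ρ.character x⁻¹) (QuotientGroup.mk' N g) := rfl
    rw [h2, ← Finset.sum_fiberwise_of_maps_to (t := Finset.univ) (g := QuotientGroup.mk' N)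
      (fun _ _ => Finset.mem_univ _)]
    rw [Finset.sum_congr rfl (g := fun x => (Nat.card N : ℂ) * (ρ.character x * ρ.character x⁻¹))]
    · rw [← Finset.mul_sum, hρ, ← Nat.cast_mul, mul_comm, ← Subgroup.card_eq_card_quotient_mul_card_subgroup]
    · intro x _
      rw [Finset.sum_congr rfl (g := fun _ => ρ.character x * ρ.character x⁻¹), Finset.sum_const,
        nsmul_eq_mul]
      · congr 2
        rw [MonoidHom.card_fiber_eq_of_mem_range (QuotientGroup.mk' N)
          (QuotientGroup.mk'_surjective N x) ⟨1, map_one _⟩, Nat.card_eq_fintype_card,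
          Fintype.card_subtype]
        congr 1
        ext g
        simp
      · intro g hg
        rw [(Finset.mem_filter.1 hg).2]
  refine le_of_eq_of_le
    (Finset.sum_image (f := fun χ : G → ℂ => (χ 1).re - c) (g := F) (fun a _ b _ h => hF h)).symm ?_
  apply Finset.sum_le_sum_of_subset_of_nonneg
  · intro ψ hψ
    obtain ⟨χ, hχ, rfl⟩ := Finset.mem_image.1 hψ
    rw [Set.Finite.mem_toFinset] at hχ ⊢
    exact hmem χ hχ
  · intro ψ hψ hn
    rw [Set.Finite.mem_toFinset] at hψ
    have h1 : ψ 1 ≠ 1 := by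
      intro h1
      obtain ⟨l, rfl⟩ := exists_lin_of_deg_one hψ h1
      apply hn
      have hker : N ≤ l.ker := hN.trans (Abelianization.commutator_subset_ker l)
      exact Finset.mem_image.2 ⟨_, (Set.Finite.mem_toFinset _).2
        (lin_mem_Irr (QuotientGroup.lift N l hker)), rfl⟩
    linarith [three_le_deg hG hψ h1]

end Average

/-! ### Fixed spaces and weights of a supplement of the commutator subgroup -/

section Fixed

variable {G : Type} [Group G] {V : Type} [AddCommGroup V] [Module ℂ V]

/-- The space of vectors fixed by a subgroup. -/
def fixedBy (ρ : Representation ℂ G V) (K : Subgroup G) : Submodule ℂ V where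
  carrier := {v | ∀ k ∈ K, ρ k v = v}
  zero_mem' := by simp
  add_mem' := by
    intro a b ha hb k hk
    rw [map_add, ha k hk, hb k hk]
  smul_mem' := by
    intro c a ha k hk
    rw [map_smul, ha k hk]

lemma mem_fixedBy {ρ : Representation ℂ G V} {K : Subgroup G} {v : V} :
    v ∈ fixedBy ρ K ↔ ∀ k ∈ K, ρ k v = v := Iff.rfl

/-- The fixed space of a subgroup normalized by `g` is stable under `g`. -/
lemma apply_mem_fixedBy {ρ : Representation ℂ G V} {K : Subgroup G} {v : V} (hv : v ∈ fixedBy ρ K)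
    {g : G} (hg : ∀ k ∈ K, g⁻¹ * k * g ∈ K) : ρ g v ∈ fixedBy ρ K := by
  intro k hk
  have h1 : k * g = g * (g⁻¹ * k * g) := by group
  rw [← Module.End.mul_apply, ← map_mul, h1, map_mul, Module.End.mul_apply, hv _ (hg k hk)]

variable [Fintype G] [FiniteDimensional ℂ V]

/-- The linear characters stabilizing the character of `ρ` occur as weights of a supplement `H` of
the commutator subgroup as soon as the trivial weight does. -/
lemma twistStab_le_finrank_fixedBy (ρ : Representation ℂ G V) (H : Subgroup G)
    (hH : H ⊔ commutator G = ⊤) {v : V} (hv0 : v ≠ 0) (hv : v ∈ fixedBy ρ H) :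
    twistStab ρ.character ≤ Module.finrank ℂ (fixedBy ρ ⁅H, H⁆) := by
  classical
  let S := {l : G →* ℂˣ // twist l ρ.character = ρ.character}
  have hfin := finite_lin (G := G)
  have _ : Fintype S := Fintype.ofFinite S
  have hHpos : (Nat.card H : ℂ) ≠ 0 := by simp
  -- `e l` is `|H|` times the projection onto the `l`-weight space of `H`.
  let e : S → Module.End ℂ V := fun l => ∑ h : H, ((l.1 (h : G)⁻¹ : ℂˣ) : ℂ) • ρ h
  have htr : ∀ l, LinearMap.trace ℂ V (e l) ≠ 0 := by
    intro l
    have h1 : LinearMap.trace ℂ V (e l) = ∑ h : H, ρ.character h := by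
      simp only [e, map_sum, map_smul, smul_eq_mul]
      refine Finset.sum_congr rfl fun h _ => ?_
      have := congrFun l.2 (h : G)
      rw [twist_apply] at this
      change _ * ρ.character h = _
      nth_rw 1 [← this]
      rw [← mul_assoc, mul_comm (_ : ℂ) ((l.1 (h : G) : ℂˣ) : ℂ), lin_mul_inv, one_mul]
    let σ : Representation ℂ H V := ρ.comp H.subtype
    let _ := invertibleOfNonzero hHpos
    have h2 := σ.card_inv_mul_sum_char_eq_finrank
    have h3 : ∑ h : H, ρ.character h = ∑ h : H, σ.character h := rfl
    intro h0
    rw [h1, h3] at h0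
    rw [h0, mul_zero] at h2
    have h4 : Module.finrank ℂ σ.invariants = 0 := by exact_mod_cast h2.symm
    rw [Submodule.finrank_eq_zero] at h4
    apply hv0
    rw [← Submodule.mem_bot ℂ, ← h4]
    exact fun h => hv h h.2
  have hex : ∀ l, ∃ w, e l w ≠ 0 := by
    intro l
    by_contra! hc
    apply htr l
    rw [show e l = 0 from LinearMap.ext hc, map_zero]
  choose w hw using hex
  let u : S → V := fun l => e l (w l)
  have hu : ∀ (l : S) (h : H), ρ h (u l) = ((l.1 h : ℂˣ) : ℂ) • u l := by
    intro l h
    simp only [u, e, LinearMap.sum_apply, map_sum, Finset.smul_sum, LinearMap.smul_apply, map_smul]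
    refine Fintype.sum_equiv (Equiv.mulLeft h) _ _ fun x => ?_
    rw [smul_smul, ← Units.val_mul, ← map_mul, ← Module.End.mul_apply, ← map_mul]
    simp
  have hinj : ∀ l m : S, (∀ h : H, l.1 h = m.1 h) → l = m := by
    intro l m hlm
    apply Subtype.ext
    have hle : H ⊔ commutator G ≤ l.1.eqLocus m.1 := by
      rw [sup_le_iff]
      refine ⟨fun h hh => hlm ⟨h, hh⟩, fun x hx => ?_⟩
      have h1 := Abelianization.commutator_subset_ker l.1 hx
      have h2 := Abelianization.commutator_subset_ker m.1 hx
      exact (MonoidHom.mem_ker.1 h1).trans (MonoidHom.mem_ker.1 h2).symm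
    rw [hH] at hle
    ext x
    exact congrArg Units.val (hle (Subgroup.mem_top x))
  have heu : ∀ l m : S, e l (u m) = if l = m then (Nat.card H : ℂ) • u m else 0 := by
    intro l m
    simp only [e, LinearMap.sum_apply, LinearMap.smul_apply, hu, smul_smul, ← Finset.sum_smul]
    let f : H →* ℂ := (Units.coeHom ℂ).comp ((l.1⁻¹ * m.1).comp H.subtype)
    have h1 : ∑ h : H, ((l.1 (h : G)⁻¹ : ℂˣ) : ℂ) * ((m.1 (h : G) : ℂˣ) : ℂ) = ∑ h : H, f h := by
      simp [f]
    rw [h1, sum_hom_units]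
    by_cases hlm : l = m
    · have : f = 1 := by ext; simp [f, hlm]
      simp [hlm, this]
    · have : f ≠ 1 := by
        intro hf
        apply hlm
        apply hinj
        intro h
        have := DFunLike.congr_fun hf h
        have h2 : (l.1⁻¹ * m.1) (h : G) = 1 := Units.ext this
        rw [MonoidHom.mul_apply, MonoidHom.inv_apply, inv_mul_eq_one] at h2
        exact h2
      simp [hlm, this]
  have hli : LinearIndependent ℂ u := by
    rw [Fintype.linearIndependent_iff]
    intro a ha l
    have := congrArg (e l) ha
    simp only [map_sum, map_smul, heu, map_zero] at this
    rw [Finset.sum_eq_single l (fun m _ hm => by rw [if_neg hm.symm, smul_zero])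
      (fun h => absurd (Finset.mem_univ l) h), if_pos rfl] at this
    have hul : u l ≠ 0 := hw l
    simpa [hul] using this
  have hmem : ∀ l, u l ∈ fixedBy ρ ⁅H, H⁆ := by
    intro l k hk
    have hkH : k ∈ H := Subgroup.commutator_le_self H hk
    rw [hu l ⟨k, hkH⟩]
    have : k ∈ commutator G := Subgroup.commutator_mono le_top le_top hk
    have := MonoidHom.mem_ker.1 (Abelianization.commutator_subset_ker l.1 this)
    simp [this]
  let u' : S → fixedBy ρ ⁅H, H⁆ := fun l => ⟨u l, hmem l⟩
  have hli' : LinearIndependent ℂ u' :=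
    LinearIndependent.of_comp (fixedBy ρ ⁅H, H⁆).subtype hli
  have := hli'.fintype_card_le_finrank
  rwa [Fintype.card_eq_nat_card] at this

lemma twistStab_le_finrank (ρ : Representation ℂ G V) (H : Subgroup G)
    (hH : H ⊔ commutator G = ⊤) {v : V} (hv0 : v ≠ 0) (hv : v ∈ fixedBy ρ H) :
    twistStab ρ.character ≤ Module.finrank ℂ V :=
  (twistStab_le_finrank_fixedBy ρ H hH hv0 hv).trans (Submodule.finrank_le _)

omit [Fintype G] in
/-- A nonzero subrepresentation of minimal dimension is irreducible. -/
lemma exists_irreducible_le (ρ : Representation ℂ G V) (W : Subrepresentation ρ) (hW : W ≠ ⊥) :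
    ∃ S : Subrepresentation ρ, S ≤ W ∧ S ≠ ⊥ ∧ S.toRepresentation.IsIrreducible := by
  classical
  let P : ℕ → Prop := fun n => ∃ S : Subrepresentation ρ, S ≤ W ∧ S ≠ ⊥ ∧
    Module.finrank ℂ S.toSubmodule = n
  have hP : ∃ n, P n := ⟨_, W, le_rfl, hW, rfl⟩
  obtain ⟨S, hSW, hS0, hSn⟩ := Nat.find_spec hP
  have hmin : ∀ T : Subrepresentation ρ, T ≤ S → T ≠ ⊥ → T = S := by
    intro T hT hT0
    have h1 := Nat.find_min' hP ⟨T, hT.trans hSW, hT0, rfl⟩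
    apply Subrepresentation.toSubmodule_injective
    exact Submodule.eq_of_le_of_finrank_le hT (by omega)
  have hS0' : S.toSubmodule ≠ ⊥ := fun h => hS0 (Subrepresentation.toSubmodule_injective h)
  refine ⟨S, hSW, hS0, ?_⟩
  have : Nontrivial (Subrepresentation S.toRepresentation) := by
    refine ⟨⊥, ⊤, fun h => hS0' ?_⟩
    have h := congrArg Subrepresentation.toSubmodule h
    have h : (⊥ : Submodule ℂ S.toSubmodule) = ⊤ := h
    rw [eq_bot_iff]
    intro x hx
    have hx' : (⟨x, hx⟩ : S.toSubmodule) ∈ (⊥ : Submodule ℂ S.toSubmodule) := by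
      rw [h]; trivial
    rw [Submodule.mem_bot] at hx' ⊢
    exact congrArg Subtype.val hx'
  refine ⟨fun T => ?_⟩
  by_cases hT : T = ⊥
  · exact Or.inl hT
  right
  let T' : Subrepresentation ρ :=
    { toSubmodule := T.toSubmodule.map S.toSubmodule.subtype
      apply_mem_toSubmodule := by
        rintro g _ ⟨x, hx, rfl⟩
        exact ⟨_, T.apply_mem_toSubmodule g hx, rfl⟩ }
  have hT' : T' = S := by
    apply hmin
    · rintro _ ⟨x, hx, rfl⟩
      exact x.2
    · intro h
      apply hT
      have h : T.toSubmodule.map S.toSubmodule.subtype = ⊥ :=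
        congrArg Subrepresentation.toSubmodule h
      apply Subrepresentation.toSubmodule_injective
      change T.toSubmodule = ⊥
      rw [eq_bot_iff]
      intro x hx
      have hx' : (x : V) ∈ T.toSubmodule.map S.toSubmodule.subtype := ⟨x, hx, rfl⟩
      rw [h, Submodule.mem_bot] at hx'
      exact Subtype.ext hx'
  apply Subrepresentation.toSubmodule_injective
  change T.toSubmodule = ⊤
  rw [eq_top_iff]
  intro x _
  have : (x : V) ∈ T' := by rw [hT']; exact x.2
  obtain ⟨y, hy, hxy⟩ := this
  rwa [← Subtype.ext hxy]

/-- A group of odd order acting on a nonzero space of dimension at most two fixes a line on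
which its commutator subgroup acts trivially. -/
lemma exists_fixed_of_finrank_le_two (hG : Odd (Nat.card G)) (ρ : Representation ℂ G V)
    (h2 : Module.finrank ℂ V ≤ 2) [Nontrivial V] :
    ∃ v ≠ 0, ∀ g ∈ commutator G, ρ g v = v := by
  have htop : (⊤ : Subrepresentation ρ) ≠ ⊥ := by
    intro h
    have h : (⊤ : Submodule ℂ V) = ⊥ := congrArg Subrepresentation.toSubmodule h
    exact top_ne_bot h
  obtain ⟨S, -, hS0, hS⟩ := exists_irreducible_le ρ ⊤ htop
  obtain ⟨d, hd, hodd⟩ := exists_odd_deg hG (mem_Irr_of_isIrreducible S.toRepresentation)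
  rw [Representation.char_one] at hd
  have hd : Module.finrank ℂ S.toSubmodule = d := by exact_mod_cast hd
  have hle := Submodule.finrank_le S.toSubmodule
  have h1 : Module.finrank ℂ S.toSubmodule = 1 := by
    obtain ⟨k, rfl⟩ := hodd; omega
  obtain ⟨l, hl⟩ := exists_lin_of_finrank_eq_one S.toRepresentation h1
  have : Nontrivial S.toSubmodule := Module.nontrivial_of_finrank_pos (R := ℂ) (by omega)
  obtain ⟨v, hv⟩ := exists_ne (0 : S.toSubmodule)
  refine ⟨v, fun h => hv (Subtype.ext h), fun g hg => ?_⟩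
  have h3 : ρ g v = ((l g : ℂ) • v : V) := congrArg Subtype.val (hl g v)
  have := MonoidHom.mem_ker.1 (Abelianization.commutator_subset_ker l hg)
  simpa [this] using h3

/-- The fixed space of `⁅H, H⁆` never has codimension one or two: an `H`-stable complement of that
dimension would contain a further vector fixed by `⁅H, H⁆`. -/
lemma fixedBy_eq_top_of_finrank_lt (hG : Odd (Nat.card G)) (ρ : Representation ℂ G V)
    (H : Subgroup G)
    (hlt : Module.finrank ℂ V < Module.finrank ℂ (fixedBy ρ ⁅H, H⁆) + 3) :
    fixedBy ρ ⁅H, H⁆ = ⊤ := by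
  let σ : Representation ℂ H V := ρ.comp H.subtype
  have hnorm : ∀ h ∈ H, ∀ k ∈ ⁅H, H⁆, h⁻¹ * k * h ∈ ⁅H, H⁆ := by
    intro h hh k hk
    rw [← H.map_subtype_commutator] at hk ⊢
    obtain ⟨x, hx, rfl⟩ := hk
    refine ⟨⟨h, hh⟩⁻¹ * x * ⟨h, hh⟩, ?_, rfl⟩
    have := (inferInstance : (commutator H).Normal).conj_mem x hx (⟨h, hh⟩⁻¹)
    simpa using this
  let U : Subrepresentation σ :=
    { toSubmodule := fixedBy ρ ⁅H, H⁆
      apply_mem_toSubmodule := fun h v hv => apply_mem_fixedBy hv (hnorm h h.2) }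
  have : Representation.IsSemisimpleRepresentation σ := inferInstance
  obtain ⟨W, hW⟩ := exists_isCompl U
  have hW' : IsCompl (fixedBy ρ ⁅H, H⁆) W.toSubmodule := by
    rw [isCompl_iff, disjoint_iff, codisjoint_iff] at hW ⊢
    exact ⟨congrArg Subrepresentation.toSubmodule hW.1, congrArg Subrepresentation.toSubmodule hW.2⟩
  have hdim := Submodule.finrank_add_eq_of_isCompl hW'
  by_cases hW0 : W.toSubmodule = ⊥
  · have := hW'.sup_eq_top
    rwa [hW0, sup_bot_eq] at this
  exfalso
  have _ := Fintype.ofFinite H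
  have : Nontrivial W.toSubmodule := Submodule.nontrivial_iff_ne_bot.2 hW0
  obtain ⟨w, hw0, hw⟩ := exists_fixed_of_finrank_le_two
    (hG.of_dvd_nat (Subgroup.card_subgroup_dvd_card H)) W.toRepresentation (by omega)
  have hwU : (w : V) ∈ fixedBy ρ ⁅H, H⁆ := by
    intro k hk
    rw [← H.map_subtype_commutator] at hk
    obtain ⟨x, hx, rfl⟩ := hk
    exact congrArg Subtype.val (hw x hx)
  have := hW'.inf_eq_bot
  have hmem : (w : V) ∈ fixedBy ρ ⁅H, H⁆ ⊓ W.toSubmodule := ⟨hwU, w.2⟩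
  rw [this, Submodule.mem_bot] at hmem
  exact hw0 (Subtype.ext hmem)

end Fixed

/-! ### Supplements of the commutator subgroup -/

section Permutation

variable {G : Type} [Group G] [Fintype G]

/-- In an irreducible representation in which a supplement `H` of the commutator subgroup has a
fixed vector, `⁅H, H⁆` acts trivially: the average degree bounds the codimension of the fixed
space of `⁅H, H⁆` by two. -/
lemma fixedBy_commutator_eq_top (hG : Odd (Nat.card G)) {c : ℝ} (hc : c ≤ 3) (h : acd G < c)
    {V : Type} [AddCommGroup V] [Module ℂ V] [FiniteDimensional ℂ V]
    (ρ : Representation ℂ G V) [ρ.IsIrreducible] (H : Subgroup G)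
    (hH : H ⊔ commutator G = ⊤) {v : V} (hv0 : v ≠ 0) (hv : v ∈ fixedBy ρ H) :
    fixedBy ρ ⁅H, H⁆ = ⊤ := by
  by_cases h1 : ρ.character 1 = 1
  · rw [ρ.char_one] at h1
    obtain ⟨l, hl⟩ := exists_lin_of_finrank_eq_one ρ (by exact_mod_cast h1)
    rw [eq_top_iff]
    intro w _ k hk
    have : k ∈ commutator G := Subgroup.commutator_mono le_top le_top hk
    rw [hl, MonoidHom.mem_ker.1 (Abelianization.commutator_subset_ker l this)]
    simp
  · apply fixedBy_eq_top_of_finrank_lt hG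
    have hle := twistStab_le_finrank_fixedBy ρ H hH hv0 hv
    have hlt := two_mul_div_twistStab_lt hG hc h (mem_Irr_of_isIrreducible ρ) h1
    have hpos : (0 : ℝ) < twistStab ρ.character := by exact_mod_cast twistStab_pos _
    rw [ρ.char_one, Complex.natCast_re, ← mul_div_assoc, div_lt_iff₀ hpos] at hlt
    have : (Module.finrank ℂ V : ℝ) < twistStab ρ.character + 3 := by nlinarith
    have : Module.finrank ℂ V < twistStab ρ.character + 3 := by exact_mod_cast this
    omega

/-- The permutation representation of `G` on the functions on `G ⧸ H`. -/
def permRep (H : Subgroup G) : Representation ℂ G (G ⧸ H → ℂ) where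
  toFun g := LinearMap.funLeft ℂ ℂ (fun x => g⁻¹ • x)
  map_one' := by ext; simp [LinearMap.funLeft]
  map_mul' a b := by
    apply LinearMap.ext
    intro f
    ext x
    simp [LinearMap.funLeft, mul_smul]

omit [Fintype G] in
lemma permRep_apply (H : Subgroup G) (g : G) (f : G ⧸ H → ℂ) (x : G ⧸ H) :
    permRep H g f x = f (g⁻¹ • x) := rfl

/-- A nonzero invariant space of functions on `G ⧸ H` contains a nonzero `H`-invariant function. -/
lemma exists_fixed_of_permRep (H : Subgroup G) (S : Subrepresentation (permRep H)) (hS : S ≠ ⊥) :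
    ∃ v : S.toSubmodule, v ≠ 0 ∧ v ∈ fixedBy S.toRepresentation H := by
  classical
  have hS0 : S.toSubmodule ≠ ⊥ := fun h => hS (Subrepresentation.toSubmodule_injective h)
  obtain ⟨f, hf, hf0⟩ := Submodule.exists_mem_ne_zero_of_ne_bot hS0
  obtain ⟨x, hx⟩ := Function.ne_iff.1 hf0
  obtain ⟨g, rfl⟩ := QuotientGroup.mk_surjective x
  let f' := permRep H g⁻¹ f
  have hf' : f' ∈ S.toSubmodule := S.apply_mem_toSubmodule g⁻¹ hf
  let a : S.toSubmodule := ∑ h : H, S.toRepresentation h ⟨f', hf'⟩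
  refine ⟨a, fun ha => ?_, fun k hk => ?_⟩
  · have h1 : (a : G ⧸ H → ℂ) ((1 : G) : G ⧸ H) = Nat.card H * f g := by
      have : (a : G ⧸ H → ℂ) = ∑ h : H, permRep H h f' := by
        simp only [a, AddSubmonoidClass.coe_finsetSum]; rfl
      rw [this, Finset.sum_apply, Finset.sum_congr rfl (g := fun _ => f g), Finset.sum_const,
        nsmul_eq_mul, Finset.card_univ, Nat.card_eq_fintype_card]
      intro h _
      simp only [f', permRep_apply, inv_inv, smul_smul]
      congr 1
      rw [MulAction.Quotient.smul_coe, QuotientGroup.eq]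
      simp
    rw [ha] at h1
    simp only [ZeroMemClass.coe_zero, Pi.zero_apply] at h1
    have := mul_eq_zero.1 h1.symm
    simp at this
    exact hx this
  · simp only [a, map_sum]
    refine Fintype.sum_equiv (Equiv.mulLeft ⟨k, hk⟩) _ _ fun y => ?_
    rw [← Module.End.mul_apply, ← map_mul]
    rfl

/-- The commutator subgroup of a supplement `H` of the commutator subgroup of `G` acts trivially
on `G ⧸ H`, since it acts trivially on every irreducible constituent of the functions on `G ⧸ H`. -/
lemma normalClosure_commutator_le (hG : Odd (Nat.card G)) {c : ℝ} (hc : c ≤ 3) (h : acd G < c)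
    (H : Subgroup G) (hH : H ⊔ commutator G = ⊤) :
    Subgroup.normalClosure ((⁅H, H⁆ : Subgroup G) : Set G) ≤ H := by
  classical
  set K := Subgroup.normalClosure ((⁅H, H⁆ : Subgroup G) : Set G) with hK
  let U : Subrepresentation (permRep H) :=
    { toSubmodule := fixedBy (permRep H) K
      apply_mem_toSubmodule := fun g v hv => apply_mem_fixedBy hv fun k hk => by
        simpa using Subgroup.normalClosure_normal.conj_mem k hk g⁻¹ }
  have : Representation.IsSemisimpleRepresentation (permRep H) := inferInstance
  obtain ⟨W, hW⟩ := exists_isCompl U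
  have hW0 : W = ⊥ := by
    by_contra hW0
    obtain ⟨S, hSW, hS0, hS⟩ := exists_irreducible_le (permRep H) W hW0
    obtain ⟨v, hv0, hv⟩ := exists_fixed_of_permRep H S hS0
    have htop := fixedBy_commutator_eq_top hG hc h S.toRepresentation H hH hv0 hv
    have hker : K ≤ S.toRepresentation.ker := by
      apply Subgroup.normalClosure_le_normal
      intro k hk
      rw [SetLike.mem_coe, MonoidHom.mem_ker]
      ext1 w
      have : w ∈ fixedBy S.toRepresentation ⁅H, H⁆ := by rw [htop]; trivial
      exact this k hk
    have hSU : S ≤ U := by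
      intro w hw k hk
      have := LinearMap.congr_fun (MonoidHom.mem_ker.1 (hker hk)) ⟨w, hw⟩
      exact congrArg Subtype.val this
    exact hS0 (le_bot_iff.1 (hW.disjoint hSU hSW))
  have hU : U = ⊤ := by
    have := hW.sup_eq_top
    rwa [hW0, sup_bot_eq] at this
  have hU' : fixedBy (permRep H) K = ⊤ := congrArg Subrepresentation.toSubmodule hU
  intro k hk
  have : (Pi.single ((1 : G) : G ⧸ H) (1 : ℂ) : G ⧸ H → ℂ) ∈ fixedBy (permRep H) K := by
    rw [hU']; trivial
  have := congrFun (this k hk) ((1 : G) : G ⧸ H)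
  rw [permRep_apply, Pi.single_eq_same] at this
  by_contra hkH
  rw [Pi.single_eq_of_ne] at this
  · exact zero_ne_one this
  · rw [MulAction.Quotient.smul_coe, Ne, QuotientGroup.eq]
    simpa using hkH

end Permutation

/-! ### Normal complements -/

section Complements

variable {G : Type} [Group G]

lemma card_comap_mk' [Finite G] (N : Subgroup G) [N.Normal] (K : Subgroup (G ⧸ N)) :
    Nat.card (K.comap (QuotientGroup.mk' N)) = Nat.card N * Nat.card K := by
  have h1 := (K.comap (QuotientGroup.mk' N)).card_mul_index
  rw [Subgroup.index_comap_of_surjective _ (QuotientGroup.mk'_surjective N),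
    N.card_eq_card_quotient_mul_card_subgroup, ← K.card_mul_index] at h1
  have : K.index ≠ 0 := Subgroup.index_ne_zero_of_finite
  apply Nat.eq_of_mul_eq_mul_right (Nat.pos_of_ne_zero this)
  rw [h1]; ring

lemma hasNormalPComplement_of_quotient [Finite G] {p : ℕ} (N : Subgroup G) [N.Normal]
    (hN : Nat.Coprime (Nat.card N) p) (h : HasNormalPComplement (G ⧸ N) p) :
    HasNormalPComplement G p := by
  obtain ⟨K, hK, hcop, n, hn⟩ := h
  refine ⟨K.comap (QuotientGroup.mk' N), inferInstance, ?_, n, ?_⟩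
  · rw [card_comap_mk']
    exact Nat.Coprime.mul_left hN hcop
  · rw [Subgroup.index_comap_of_surjective _ (QuotientGroup.mk'_surjective N), hn]

/-- Burnside's transfer theorem. -/
lemma hasNormalPComplement_of_normalizer_le [Finite G] {p : ℕ} [hp : Fact p.Prime] (P : Sylow p G)
    (hP : Subgroup.normalizer P ≤ Subgroup.centralizer (P : Set G)) :
    HasNormalPComplement G p := by
  have hc := MonoidHom.ker_transferSylow_isComplement' P hP
  have hnd := MonoidHom.not_dvd_card_ker_transferSylow P hP
  obtain ⟨n, hn⟩ := IsPGroup.iff_card.1 P.isPGroup'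
  refine ⟨_, MonoidHom.normal_ker (MonoidHom.transferSylow P hP), ?_, n, ?_⟩
  · exact ((Nat.Prime.coprime_iff_not_dvd hp.out).2 hnd).symm
  · rw [hc.symm.index_eq_card]; exact hn

open scoped commutatorElement in
lemma hasNormalPComplement_of_commutator_eq_bot [Finite G] {p : ℕ} [hp : Fact p.Prime]
    (h : commutator G = ⊥) : HasNormalPComplement G p := by
  obtain ⟨P⟩ : Nonempty (Sylow p G) := inferInstance
  refine hasNormalPComplement_of_normalizer_le P fun x _ y _ => ?_
  have : ⁅y, x⁆ ∈ commutator G :=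
    Subgroup.commutator_mem_commutator (Subgroup.mem_top y) (Subgroup.mem_top x)
  rw [h, Subgroup.mem_bot, commutatorElement_eq_one_iff_mul_comm] at this
  exact this

/-- A subgroup with a normal `p`-complement that is normal and minimal such in `G`, and of order
divisible by `p`, is a `p`-group, because its normal `p`-complement is normal in `G`. -/
lemma isPGroup_of_hasNormalPComplement [Finite G] {p : ℕ} [hp : Fact p.Prime] (N : Subgroup G)
    [hN : N.Normal] (hmin : ∀ M : Subgroup G, M.Normal → M ≤ N → M = ⊥ ∨ M = N)
    (hpN : p ∣ Nat.card N) (h : HasNormalPComplement N p) : IsPGroup p N := by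
  obtain ⟨K, hK, hcop, n, hn⟩ := h
  have hmem : ∀ x : N, Nat.Coprime (orderOf x) p → x ∈ K := by
    intro x hx
    rw [← QuotientGroup.eq_one_iff, ← orderOf_eq_one_iff]
    have h1 : orderOf (x : N ⧸ K) ∣ orderOf x := orderOf_map_dvd (QuotientGroup.mk' K) x
    have h2 : orderOf (x : N ⧸ K) ∣ p ^ n := hn ▸ orderOf_dvd_natCard (x : N ⧸ K)
    exact Nat.eq_one_of_dvd_coprimes (hx.pow_right n) h1 h2
  have hMn : (K.map N.subtype).Normal := by
    constructor
    rintro _ ⟨x, hx, rfl⟩ g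
    refine ⟨MulAut.conjNormal g x, hmem _ ?_, by simp⟩
    rw [MulEquiv.orderOf_eq]
    refine Nat.Coprime.coprime_dvd_left ?_ hcop
    rw [← Subgroup.orderOf_mk x hx]
    exact orderOf_dvd_natCard _
  rcases hmin _ hMn (Subgroup.map_subtype_le K) with h | h
  · have hK0 : K = ⊥ := (Subgroup.map_eq_bot_iff_of_injective K N.subtype_injective).1 h
    rw [hK0, Subgroup.index_bot] at hn
    exact IsPGroup.iff_card.2 ⟨n, hn⟩
  · exfalso
    have hc : Nat.card (K.map N.subtype) = Nat.card K :=
      Nat.card_congr (K.equivMapOfInjective _ N.subtype_injective).toEquiv.symm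
    rw [h] at hc
    rw [← hc] at hcop
    exact (Nat.Prime.coprime_iff_not_dvd hp.out).1 hcop.symm hpN

lemma isMulCommutative_of_minimal [Finite G] {p : ℕ} [hp : Fact p.Prime] (N : Subgroup G)
    [hN : N.Normal] (hmin : ∀ M : Subgroup G, M.Normal → M ≤ N → M = ⊥ ∨ M = N) (hN0 : N ≠ ⊥)
    (hpN : IsPGroup p N) : IsMulCommutative N := by
  have : Nontrivial N := N.nontrivial_iff_ne_bot.2 hN0
  have hc := hpN.center_nontrivial
  have hn : ((Subgroup.center N).map N.subtype).Normal := ConjAct.normal_of_characteristic_of_normal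
  rcases hmin _ hn (Subgroup.map_subtype_le _) with h | h
  · rw [Subgroup.map_eq_bot_iff_of_injective _ N.subtype_injective] at h
    exact absurd h ((Subgroup.nontrivial_iff_ne_bot _).1 hc)
  · refine ⟨⟨fun a b => ?_⟩⟩
    have ha : (a : G) ∈ (Subgroup.center N).map N.subtype := by rw [h]; exact a.2
    obtain ⟨x, hx, hxa⟩ := ha
    have : x = a := Subtype.ext hxa
    subst this
    exact (Subgroup.mem_center_iff.1 hx b).symm

open scoped Pointwise in
open MulOpposite MulAction in
/-- A complement of an abelian normal Hall subgroup is the stabilizer of its class in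
`Subgroup.QuotientDiff`. -/
lemma exists_stabilizer_eq_of_isComplement' [Finite G] (A C : Subgroup G) [A.Normal]
    [IsMulCommutative A] (hA : Nat.Coprime (Nat.card A) A.index) (hC : A.IsComplement' C) :
    ∃ α : A.QuotientDiff, stabilizer G α = C := by
  let T : A.LeftTransversal := ⟨(C : Set G), hC.symm⟩
  let α : A.QuotientDiff := Quotient.mk'' T
  have hle : C ≤ stabilizer G α := by
    intro x hx
    rw [mem_stabilizer_iff]
    change (Quotient.mk'' (op x⁻¹ • T) : A.QuotientDiff) = Quotient.mk'' T
    congr 1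
    apply Subtype.ext
    change op x⁻¹ • (C : Set G) = C
    exact rightCoset_mem_rightCoset C (C.inv_mem hx)
  have hs := Subgroup.isComplement'_stabilizer_of_coprime (α := α) hA
  refine ⟨α, (Subgroup.eq_of_le_of_card_ge hle ?_).symm⟩
  rw [← hs.symm.index_eq_card, ← hC.symm.index_eq_card]

/-- Complements of an abelian normal Hall subgroup are conjugate under that subgroup. -/
lemma exists_conj_of_isComplement' [Finite G] (A C D : Subgroup G) [A.Normal]
    [IsMulCommutative A] (hA : Nat.Coprime (Nat.card A) A.index) (hC : A.IsComplement' C)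
    (hD : A.IsComplement' D) : ∃ a ∈ A, D = C.map (MulAut.conj a).toMonoidHom := by
  obtain ⟨α, hα⟩ := exists_stabilizer_eq_of_isComplement' A C hA hC
  obtain ⟨β, hβ⟩ := exists_stabilizer_eq_of_isComplement' A D hA hD
  obtain ⟨a, ha⟩ := Subgroup.exists_smul_eq hA α β
  refine ⟨a, a.2, ?_⟩
  rw [← hα, ← hβ, ← ha]
  exact MulAction.stabilizer_smul_eq_stabilizer_map_conj (a : G) α

/-- If `G ⧸ N` is `p`-nilpotent for an abelian minimal normal `p`-subgroup `N`, then `G` is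
`p`-nilpotent or `N` is complemented in `G`: the normalizer of a complement of `N` in the
preimage of the `p`-complement of `G ⧸ N` is a supplement of `N` by the Frattini argument. -/
lemma hasNormalPComplement_or_exists_complement [Finite G] {p : ℕ} [hp : Fact p.Prime]
    (N : Subgroup G) [hN : N.Normal] [hab : IsMulCommutative N]
    (hmin : ∀ M : Subgroup G, M.Normal → M ≤ N → M = ⊥ ∨ M = N) (hpN : IsPGroup p N)
    (hq : HasNormalPComplement (G ⧸ N) p) :
    HasNormalPComplement G p ∨ ∃ H : Subgroup G, N ⊓ H = ⊥ ∧ H ⊔ N = ⊤ := by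
  obtain ⟨Kb, hKb, hcop, n, hn⟩ := hq
  obtain ⟨m, hm⟩ := IsPGroup.iff_card.1 hpN
  set K := Kb.comap (QuotientGroup.mk' N) with hK
  have hKn : K.Normal := inferInstance
  have hNK : N ≤ K := by
    intro x hx
    rw [hK, Subgroup.mem_comap]
    have : QuotientGroup.mk' N x = 1 := (QuotientGroup.eq_one_iff x).2 hx
    rw [this]; exact Kb.one_mem
  have hcK : Nat.card K = Nat.card N * Nat.card Kb := card_comap_mk' N Kb
  have hiK : K.index = p ^ n := by
    rw [hK, Subgroup.index_comap_of_surjective _ (QuotientGroup.mk'_surjective N), hn]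
  let A : Subgroup K := N.subgroupOf K
  have hAn : A.Normal := inferInstance
  have hcA : Nat.card A = Nat.card N := Nat.card_congr (Subgroup.subgroupOfEquivOfLe hNK).toEquiv
  have hiA : A.index = Nat.card Kb := by
    have := A.card_mul_index
    rw [hcA, hcK] at this
    exact Nat.eq_of_mul_eq_mul_left Nat.card_pos this
  have hAcomm : IsMulCommutative A := by
    refine ⟨⟨fun a b => ?_⟩⟩
    have h1 := hab.is_comm.comm (⟨((a : K) : G), a.2⟩ : N) (⟨((b : K) : G), b.2⟩ : N)
    have h2 : ((a : K) : G) * ((b : K) : G) = ((b : K) : G) * ((a : K) : G) :=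
      congrArg Subtype.val h1
    exact Subtype.ext (Subtype.ext h2)
  have hAcop : Nat.Coprime (Nat.card A) A.index := by
    rw [hcA, hiA, hm]
    exact (hcop.symm.pow_left m)
  obtain ⟨C, hC⟩ := Subgroup.exists_right_complement'_of_coprime hAcop
  have hcC : Nat.card C = Nat.card Kb := by rw [← hC.symm.index_eq_card, hiA]
  let D := C.map K.subtype
  have hcD : Nat.card D = Nat.card Kb := by
    rw [← hcC]
    exact Nat.card_congr (C.equivMapOfInjective _ K.subtype_injective).toEquiv.symm
  let H := Subgroup.normalizer (D : Set G)
  have hHN : H ⊔ N = ⊤ := by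
    rw [eq_top_iff]
    intro g _
    -- the conjugate of `C` by `g` is also its conjugate by some `a ∈ N`, so `g⁻¹ * a ∈ H`
    let C' : Subgroup K := C.map (MulAut.conjNormal g : MulAut K).toMonoidHom
    have hcC' : Nat.card C' = Nat.card C :=
      Nat.card_congr (C.equivMapOfInjective _ (MulAut.conjNormal g : MulAut K).injective).toEquiv.symm
    have hC' : A.IsComplement' C' := by
      apply Subgroup.isComplement'_of_coprime
      · rw [hcC', hcA, hcC, hcK]
      · rw [hcC', hcC, ← hiA]; exact hAcop
    obtain ⟨a, ha, hCa⟩ := exists_conj_of_isComplement' A C C' hAcop hC hC'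
    have haN : (a : G) ∈ N := ha
    have hg : g⁻¹ * (a : G) ∈ H := by
      have h1 : ∀ y : K, y ∈ C' ↔ g⁻¹ * (y : G) * g ∈ D := by
        intro y
        constructor
        · rintro ⟨c, hc, rfl⟩
          refine ⟨c, hc, ?_⟩
          simp [MulAut.conjNormal_apply, mul_assoc]
        · rintro ⟨c, hc, hcy⟩
          refine ⟨c, hc, Subtype.ext ?_⟩
          have hcy' : (c : G) = g⁻¹ * (y : G) * g := hcy
          simp [MulAut.conjNormal_apply, hcy', mul_assoc]
      have h2 : ∀ y : K, y ∈ C' ↔ (a : G)⁻¹ * (y : G) * (a : G) ∈ D := by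
        intro y
        rw [hCa]
        constructor
        · rintro ⟨c, hc, rfl⟩
          refine ⟨c, hc, ?_⟩
          simp [mul_assoc]
        · rintro ⟨c, hc, hcy⟩
          refine ⟨c, hc, Subtype.ext ?_⟩
          have hcy' : (c : G) = (a : G)⁻¹ * (y : G) * a := hcy
          simp [hcy', mul_assoc]
      have hDK : D ≤ K := Subgroup.map_subtype_le C
      rw [Subgroup.mem_normalizer_iff]
      intro x
      by_cases hx : x ∈ K
      · have h3 := h1 ⟨a * x * (a : G)⁻¹, hKn.conj_mem x hx a⟩
        rw [h2] at h3
        have e1 : (a : G)⁻¹ * (a * x * (a : G)⁻¹) * a = x := by group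
        have e2 : g⁻¹ * (a * x * (a : G)⁻¹) * g = g⁻¹ * a * x * (g⁻¹ * (a : G))⁻¹ := by group
        simp only [e1, e2] at h3
        exact h3
      · refine iff_of_false (fun h => hx (hDK h)) fun h => hx ?_
        have h3 := hKn.conj_mem _ (hDK h) (g⁻¹ * (a : G))⁻¹
        have e1 : (g⁻¹ * (a : G))⁻¹ * (g⁻¹ * a * x * (g⁻¹ * (a : G))⁻¹) * (g⁻¹ * (a : G))⁻¹⁻¹ = x := by
          group
        rwa [e1] at h3
    have : g = (a : G) * (g⁻¹ * (a : G))⁻¹ := by group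
    rw [this]
    exact Subgroup.mul_mem _ ((le_sup_right : N ≤ H ⊔ N) haN)
      ((le_sup_left : H ≤ H ⊔ N) (H.inv_mem hg))
  by_cases hHt : H = ⊤
  · left
    have hDn : D.Normal := Subgroup.normalizer_eq_top_iff.1 hHt
    refine ⟨D, hDn, by rw [hcD]; exact hcop, m + n, ?_⟩
    have h1 := D.card_mul_index
    rw [← K.card_mul_index, hcD, hcK, hiK, hm] at h1
    have hpos : 0 < Nat.card Kb := Nat.card_pos
    apply Nat.eq_of_mul_eq_mul_left hpos
    rw [h1, pow_add]; ring
  · right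
    refine ⟨H, ?_, hHN⟩
    have hnor : (N ⊓ H).Normal := by
      have h1 : H ⊔ N ≤ Subgroup.normalizer ((N ⊓ H : Subgroup G) : Set G) := by
        rw [sup_le_iff]
        constructor
        · intro h hh
          rw [Subgroup.mem_normalizer_iff]
          intro x
          simp only [Subgroup.mem_inf]
          refine and_congr ⟨fun hx => hN.conj_mem x hx h, fun hx => ?_⟩ ?_
          · have h3 := hN.conj_mem _ hx h⁻¹
            have e1 : h⁻¹ * (h * x * h⁻¹) * h⁻¹⁻¹ = x := by group
            rwa [e1] at h3
          · rw [Subgroup.mul_mem_cancel_right H (H.inv_mem hh), Subgroup.mul_mem_cancel_left H hh]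
        · intro x hx
          rw [Subgroup.mem_normalizer_iff]
          intro y
          have key : ∀ y ∈ N, ∀ x ∈ N, x * y * x⁻¹ = y := by
            intro y hy x hx
            have := congrArg Subtype.val (hab.is_comm.comm ⟨x, hx⟩ ⟨y, hy⟩)
            have : x * y = y * x := this
            rw [this]; group
          constructor
          · intro hy
            rw [key y hy.1 x hx]; exact hy
          · intro hy
            have h2 := key _ hy.1 x⁻¹ (N.inv_mem hx)
            have h3 : x⁻¹ * (x * y * x⁻¹) * x⁻¹⁻¹ = y := by group
            rw [← h3, h2]; exact hy
      rw [hHN, top_le_iff] at h1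
      exact Subgroup.normalizer_eq_top_iff.1 h1
    rcases hmin _ hnor inf_le_left with h | h
    · exact h
    · exfalso
      apply hHt
      rw [← hHN, left_eq_sup]
      exact inf_eq_left.1 h

end Complements

/-! ### Minimal normal subgroups inside the derived subgroup -/

section MinimalNormal

variable {G : Type} [Group G] [Fintype G]

/-- A minimal normal subgroup `N ≤ G'` of order divisible by `p` is a `p`-group: the normalizer
`H` in `G` of a Sylow `p`-subgroup of `N` supplements `N`, so if `H` is proper then `N` meets the
normal closure of `[H, H]` trivially, and Burnside's transfer theorem applies to `N`. -/
lemma isPGroup_of_minimal (hG : Odd (Nat.card G)) {c : ℝ} (hc : c ≤ 3) (h : acd G < c)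
    {p : ℕ} [hp : Fact p.Prime] (N : Subgroup G) [hN : N.Normal]
    (hmin : ∀ M : Subgroup G, M.Normal → M ≤ N → M = ⊥ ∨ M = N)
    (hNG : N ≤ commutator G) (hpN : p ∣ Nat.card N) : IsPGroup p N := by
  obtain ⟨P⟩ : Nonempty (Sylow p N) := inferInstance
  let Q : Subgroup G := (P : Subgroup N).map N.subtype
  let H : Subgroup G := Subgroup.normalizer (Q : Set G)
  have hHN : H ⊔ N = ⊤ := Sylow.normalizer_sup_eq_top P
  have hP0 : (P : Subgroup N) ≠ ⊥ := P.ne_bot_of_dvd_card hpN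
  by_cases hHt : H = ⊤
  · have hQn : Q.Normal := Subgroup.normalizer_eq_top_iff.1 hHt
    rcases hmin Q hQn (Subgroup.map_subtype_le _) with h1 | h1
    · exact absurd ((Subgroup.map_eq_bot_iff_of_injective _ N.subtype_injective).1 h1) hP0
    · have h2 : IsPGroup p Q := P.isPGroup'.map _
      rw [h1] at h2
      exact h2
  · have hsup : H ⊔ commutator G = ⊤ := by
      rw [eq_top_iff, ← hHN]; exact sup_le_sup_left hNG H
    have hK := normalClosure_commutator_le hG hc h H hsup
    set K := Subgroup.normalClosure ((⁅H, H⁆ : Subgroup G) : Set G) with hKdef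
    have hbot : N ⊓ K = ⊥ := by
      rcases hmin (N ⊓ K) inferInstance inf_le_left with h1 | h1
      · exact h1
      · exfalso
        apply hHt
        rw [← hHN, left_eq_sup]
        exact (inf_eq_left.1 h1).trans hK
    apply isPGroup_of_hasNormalPComplement N hmin hpN
    refine hasNormalPComplement_of_normalizer_le P ?_
    intro x hx y hy
    have hQH : Q ≤ H := Subgroup.le_normalizer
    have hxH : (x : G) ∈ H := by
      have hx' : x ∈ Subgroup.normalizer ((P : Subgroup N) : Set N) := hx
      rw [Subgroup.mem_normalizer_iff] at hx' ⊢
      intro z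
      by_cases hz : z ∈ N
      · have h1 := hx' ⟨z, hz⟩
        have e : ∀ w : N, (w : G) ∈ Q ↔ w ∈ (P : Subgroup N) := fun w =>
          Subgroup.mem_map_iff_mem N.subtype_injective
        have h2 := e ⟨z, hz⟩
        have h3 := e (x * ⟨z, hz⟩ * x⁻¹)
        exact h2.trans (h1.trans h3.symm)
      · have hQN : Q ≤ N := Subgroup.map_subtype_le _
        refine iff_of_false (fun h => hz (hQN h)) fun h => hz ?_
        have h3 := hN.conj_mem _ (hQN h) (x : G)⁻¹
        have e1 : (x : G)⁻¹ * (x * z * (x : G)⁻¹) * (x : G)⁻¹⁻¹ = z := by group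
        rwa [e1] at h3
    have hyH : (y : G) ∈ H := hQH ⟨y, hy, rfl⟩
    have h1 : (y : G) * x * (y : G)⁻¹ * (x : G)⁻¹ ∈ N ⊓ K :=
      ⟨(y * x * y⁻¹ * x⁻¹ : N).2,
        Subgroup.subset_normalClosure (Subgroup.commutator_mem_commutator hyH hxH)⟩
    rw [hbot, Subgroup.mem_bot, mul_inv_eq_one, mul_inv_eq_iff_eq_mul] at h1
    exact Subtype.ext h1

end MinimalNormal

/-! ### Monomial representations attached to orbits of characters of a complemented subgroup -/

section Monomial

variable {G : Type} [Group G]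

/-- The projection to `N` along a complement `H`, as a crossed homomorphism. -/
lemma exists_crossedHom (N H : Subgroup G) [hN : N.Normal] (hNH : N ⊓ H = ⊥) (hHN : H ⊔ N = ⊤) :
    ∃ n : G → N, (∀ g g', n (g * g') = MulAut.conjNormal g (n g') * n g) ∧
      (∀ y : N, n y = y) ∧ ∀ x ∈ H, n x = 1 := by
  have hex : ∀ g : G, ∃ y : N, (y : G)⁻¹ * g ∈ H := by
    intro g
    have hg : g ∈ N ⊔ H := by rw [sup_comm, hHN]; trivial
    obtain ⟨y, hy, x, hx, rfl⟩ := Subgroup.mem_sup_of_normal_left.1 hg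
    exact ⟨⟨y, hy⟩, by simpa using hx⟩
  choose n hn using hex
  have huniq : ∀ (g : G) (y : N), (y : G)⁻¹ * g ∈ H → n g = y := by
    intro g y hy
    have h1 : (y : G)⁻¹ * n g ∈ N ⊓ H := by
      refine ⟨(y⁻¹ * n g).2, ?_⟩
      have := H.mul_mem hy (H.inv_mem (hn g))
      have e : (y : G)⁻¹ * g * ((n g : G)⁻¹ * g)⁻¹ = (y : G)⁻¹ * n g := by group
      rwa [e] at this
    rw [hNH, Subgroup.mem_bot, inv_mul_eq_one] at h1
    exact Subtype.ext h1.symm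
  refine ⟨n, fun g g' => huniq _ _ ?_, fun y => huniq _ _ (by simp), fun x hx =>
    huniq _ _ (by simpa using hx)⟩
  have e : ((MulAut.conjNormal g (n g') * n g : N) : G)⁻¹ * (g * g') =
      ((n g : G)⁻¹ * g) * ((n g' : G)⁻¹ * g') := by
    rw [Subgroup.coe_mul, MulAut.conjNormal_apply]
    group
  rw [e]
  exact H.mul_mem (hn g) (hn g')

/-- The representation of `G` on functions on `X`, where `X` indexes a `G`-stable family `e` of
linear characters of `N` and `n` is the projection of `G` to `N` along a complement. -/
def monomialRep {X : Type} [MulAction G X] (N : Subgroup G) [N.Normal] (e : X → N →* ℂˣ)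
    (he : ∀ (g : G) x y, e (g⁻¹ • x) y = e x (MulAut.conjNormal g y))
    (n : G → N) (hn : ∀ g g', n (g * g') = MulAut.conjNormal g (n g') * n g) :
    Representation ℂ G (X → ℂ) where
  toFun g :=
    { toFun := fun f x => (e x (n g) : ℂ) * f (g⁻¹ • x)
      map_add' := fun f f' => by ext x; simp [mul_add]
      map_smul' := fun a f => by ext x; simp; ring }
  map_one' := by
    have h1 : n 1 = 1 := by simpa using hn 1 1
    apply LinearMap.ext
    intro f
    ext x
    simp [h1]
  map_mul' a b := by
    apply LinearMap.ext
    intro f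
    ext x
    simp [hn, he, mul_smul]
    ring

variable {X : Type} [MulAction G X] (N : Subgroup G) [hN : N.Normal] (e : X → N →* ℂˣ)
    (he : ∀ (g : G) x y, e (g⁻¹ • x) y = e x (MulAut.conjNormal g y))
    (n : G → N) (hn : ∀ g g', n (g * g') = MulAut.conjNormal g (n g') * n g)

lemma monomialRep_apply (g : G) (f : X → ℂ) (x : X) :
    monomialRep N e he n hn g f x = (e x (n g) : ℂ) * f (g⁻¹ • x) := rfl

variable [hab : IsMulCommutative N] (hinj : Function.Injective e) (hnN : ∀ y : N, n y = y)

include he hinj in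
lemma inv_smul_eq_of_mem (y : N) (x : X) : (y : G)⁻¹ • x = x := by
  apply hinj
  ext z
  rw [he]
  congr 2
  apply Subtype.ext
  have : (y : G) * z = z * y := congrArg Subtype.val (hab.is_comm.comm y z)
  rw [MulAut.conjNormal_apply, this]
  group

include hinj hnN in
lemma monomialRep_apply_of_mem (y : N) (f : X → ℂ) (x : X) :
    monomialRep N e he n hn y f x = (e x y : ℂ) * f x := by
  rw [monomialRep_apply, hnN, inv_smul_eq_of_mem N e he hinj]

variable [Fintype G] [Fintype X]

omit hN hab [Fintype G] in
lemma sum_lin_mul_inv (μ ν : N →* ℂˣ) [Decidable (μ = ν)] [Fintype N] :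
    ∑ y : N, ((μ y : ℂ)) * ((ν y : ℂˣ)⁻¹ : ℂˣ) = if μ = ν then (Nat.card N : ℂ) else 0 := by
  classical
  have h1 := sum_hom_units ((Units.coeHom ℂ).comp (μ * ν⁻¹))
  have h2 : (Units.coeHom ℂ).comp (μ * ν⁻¹) = 1 ↔ μ = ν := by
    rw [← mul_inv_eq_one (a := μ)]
    constructor
    · intro h
      ext y
      exact DFunLike.congr_fun h y
    · intro h
      rw [h]; rfl
  simp only [h2] at h1
  rw [Nat.card_eq_fintype_card]
  split_ifs at h1 ⊢ with h
  · simpa using h1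
  · simpa using h1

include hinj hnN in
lemma monomialRep_isIrreducible [Nonempty X] [MulAction.IsPretransitive G X] :
    (monomialRep N e he n hn).IsIrreducible := by
  classical
  have _ := Fintype.ofFinite N
  have hbt : (⊥ : Subrepresentation (monomialRep N e he n hn)) ≠ ⊤ := by
    intro h
    have h1 : (1 : X → ℂ) ∈ (⊤ : Subrepresentation (monomialRep N e he n hn)).toSubmodule := trivial
    rw [← h] at h1
    have h2 : (1 : X → ℂ) = 0 := h1
    obtain ⟨x⟩ := ‹Nonempty X›
    simpa using congrFun h2 x
  refine { exists_pair_ne := ⟨⊥, ⊤, hbt⟩, eq_bot_or_eq_top := fun W => ?_ }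
  refine or_iff_not_imp_left.2 fun hW => ?_
  have hW0 : W.toSubmodule ≠ ⊥ := fun h => hW (Subrepresentation.toSubmodule_injective h)
  obtain ⟨f, hf, hf0⟩ := Submodule.exists_mem_ne_zero_of_ne_bot hW0
  obtain ⟨x₀, hx₀⟩ := Function.ne_iff.1 hf0
  -- averaging against the character `e x₀` of `N` projects onto functions supported at `x₀`
  have hproj : ∑ y : N, ((e x₀ y)⁻¹ : ℂˣ).1 • monomialRep N e he n hn (y : G) f =
      (Nat.card N * f x₀) • Pi.single x₀ (1 : ℂ) := by
    ext x
    simp only [Finset.sum_apply, Pi.smul_apply, smul_eq_mul,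
      monomialRep_apply_of_mem N e he n hn hinj hnN]
    have h1 := sum_lin_mul_inv N (e x) (e x₀)
    have h2 : ∑ y : N, ((e x₀ y)⁻¹ : ℂˣ).1 * ((e x y : ℂ) * f x) =
        (∑ y : N, (e x y : ℂ) * ((e x₀ y)⁻¹ : ℂˣ).1) * f x := by
      rw [Finset.sum_mul]
      exact Finset.sum_congr rfl fun y _ => by ring
    rw [h2, h1]
    by_cases hx : x = x₀
    · subst hx; simp
    · rw [if_neg (fun h => hx (hinj h)), Pi.single_eq_of_ne hx]; simp
  have hsingle₀ : Pi.single x₀ (1 : ℂ) ∈ W.toSubmodule := by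
    have h1 : (Nat.card N * f x₀) • Pi.single x₀ (1 : ℂ) ∈ W.toSubmodule := by
      rw [← hproj]
      exact Submodule.sum_mem _ fun y _ => Submodule.smul_mem _ _ (W.apply_mem_toSubmodule _ hf)
    refine (Submodule.smul_mem_iff _ (mul_ne_zero ?_ hx₀)).1 h1
    exact_mod_cast Nat.card_pos.ne'
  have hsingle : ∀ x, Pi.single x (1 : ℂ) ∈ W.toSubmodule := by
    intro x
    obtain ⟨g, rfl⟩ := MulAction.exists_smul_eq G x₀ x
    have h1 := W.apply_mem_toSubmodule g hsingle₀
    have h2 : monomialRep N e he n hn g (Pi.single x₀ (1 : ℂ)) =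
        (e (g • x₀) (n g) : ℂ) • Pi.single (g • x₀) (1 : ℂ) := by
      ext x
      rw [monomialRep_apply, Pi.smul_apply, smul_eq_mul]
      by_cases hx : x = g • x₀
      · subst hx; simp
      · rw [Pi.single_eq_of_ne hx, Pi.single_eq_of_ne]
        · simp
        · intro h; apply hx; rw [← h, smul_inv_smul]
    rw [h2] at h1
    exact (Submodule.smul_mem_iff _ (Units.ne_zero _)).1 h1
  apply Subrepresentation.toSubmodule_injective
  refine eq_top_iff.2 fun v _ => ?_
  have : v = ∑ x, v x • Pi.single x (1 : ℂ) := by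
    ext z; simp [Pi.single_apply]
  rw [this]
  exact Submodule.sum_mem _ fun x _ => Submodule.smul_mem _ _ (hsingle x)

omit [Fintype G] in
include hinj hnN in
lemma monomialRep_character_of_mem (y : N) :
    (monomialRep N e he n hn).character y = ∑ x, (e x y : ℂ) := by
  classical
  rw [Representation.character, LinearMap.trace_eq_matrix_trace ℂ (Pi.basisFun ℂ X), Matrix.trace]
  refine Finset.sum_congr rfl fun x _ => ?_
  rw [Matrix.diag_apply, LinearMap.toMatrix_apply, Pi.basisFun_apply, Pi.basisFun_repr,
    monomialRep_apply_of_mem N e he n hn hinj hnN]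
  simp

end Monomial

/-! ### Orbits of characters of a complemented abelian normal subgroup -/

section OrbitSizes

variable {G : Type} [Group G]

/-- The conjugation action of `G` on the linear characters of a normal subgroup. -/
@[reducible]
def dualAction (N : Subgroup G) [N.Normal] : MulAction G (N →* ℂˣ) where
  smul g μ := μ.comp (MulAut.conjNormal g⁻¹ : MulAut N).toMonoidHom
  one_smul μ := by
    change μ.comp (MulAut.conjNormal (1 : G)⁻¹ : MulAut N).toMonoidHom = μ
    ext y
    simp
  mul_smul a b μ := by
    change μ.comp (MulAut.conjNormal (a * b)⁻¹ : MulAut N).toMonoidHom =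
      (μ.comp (MulAut.conjNormal b⁻¹ : MulAut N).toMonoidHom).comp
        (MulAut.conjNormal a⁻¹ : MulAut N).toMonoidHom
    ext y
    simp

attribute [local instance] dualAction

lemma dualAction_inv_smul (N : Subgroup G) [N.Normal] (g : G) (μ : N →* ℂˣ) (y : N) :
    (g⁻¹ • μ) y = μ (MulAut.conjNormal g y) := by
  change μ (MulAut.conjNormal g⁻¹⁻¹ y) = _
  rw [inv_inv]

/-- If `N` has prime order, the stabilizer of a nontrivial character of `N` is the kernel of the
conjugation action on `N`, so its index divides the order of `MulAut N`. -/
lemma card_orbit_dvd [Finite G] (N : Subgroup G) [N.Normal] (hp : (Nat.card N).Prime)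
    (μ : N →* ℂˣ) (hμ : μ ≠ 1) : Nat.card (MulAction.orbit G μ) ∣ Nat.card N - 1 := by
  have _ : Fact (Nat.card N).Prime := ⟨hp⟩
  have hcyc : IsCyclic N := isCyclic_of_prime_card (p := Nat.card N) rfl
  have hsimple : IsSimpleGroup N := isSimpleGroup_of_prime_card (p := Nat.card N) rfl
  have hker : μ.ker = ⊥ := by
    rcases hsimple.eq_bot_or_eq_top_of_normal μ.ker inferInstance with h | h
    · exact h
    · exact absurd (MonoidHom.ker_eq_top_iff.1 h) hμ
  have hinj := (MonoidHom.ker_eq_bot_iff μ).1 hker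
  have hstab : MulAction.stabilizer G μ = (MulAut.conjNormal : G →* MulAut N).ker := by
    ext g
    rw [← inv_mem_iff, MulAction.mem_stabilizer_iff, MonoidHom.mem_ker]
    constructor
    · intro h
      ext y
      have h1 := dualAction_inv_smul N g μ y
      rw [h] at h1
      rw [← hinj h1]; rfl
    · intro h
      ext y
      rw [dualAction_inv_smul, h]; rfl
  have h1 : Nat.card (MulAction.orbit G μ) = (MulAction.stabilizer G μ).index := by
    rw [MulAction.index_stabilizer, Nat.card_coe_set_eq]
  rw [h1, hstab, Subgroup.index_ker, ← Nat.totient_prime hp, ← IsCyclic.card_mulAut N]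
  exact Subgroup.card_subgroup_dvd_card _

/-- The nontrivial `G`-orbits on the characters of a complemented abelian normal subgroup
`N ≤ G'` satisfy strong restrictions when `acd G < c`: the size of each orbit is the degree of a nonlinear
irreducible character of `G` having a vector fixed by a complement, and characters from distinct
orbits are not twists of each other. -/
lemma exists_orbit_sizes [Fintype G] (hG : Odd (Nat.card G)) {c : ℝ} (hc : c ≤ 3) (h : acd G < c)
    (N H : Subgroup G) [hN : N.Normal] [hab : IsMulCommutative N] (hNG : N ≤ commutator G)
    (hNH : N ⊓ H = ⊥) (hHN : H ⊔ N = ⊤) :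
    ∃ (Ω : Type) (_ : Fintype Ω) (d : Ω → ℕ), (∀ ω, Odd (d ω) ∧ 3 ≤ d ω) ∧
      ∑ ω, d ω + 1 = Nat.card N ∧ ∑ ω, (1 - c / d ω) < c - 1 ∧
      (∀ ω, 2 * (1 - c / d ω) < c - 1) ∧ ((Nat.card N).Prime → ∀ ω, d ω ∣ Nat.card N - 1) := by
  classical
  obtain ⟨n, hn, hnN, hnH⟩ := exists_crossedHom N H hNH hHN
  have hsup : H ⊔ commutator G = ⊤ := by
    rw [eq_top_iff, ← hHN]; exact sup_le_sup_left hNG H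
  have hcardD : Nat.card (N →* ℂˣ) = Nat.card N :=
    let _ : CommGroup N := { mul_comm := hab.is_comm.comm }
    CommGroup.card_monoidHom_of_hasEnoughRootsOfUnity N ℂ
  have hfinD : Finite (N →* ℂˣ) :=
    Nat.finite_of_card_ne_zero (by rw [hcardD]; exact Nat.card_pos.ne')
  have _ := Fintype.ofFinite (N →* ℂˣ)
  have _ := Fintype.ofFinite N
  let Q := MulAction.orbitRel.Quotient G (N →* ℂˣ)
  have _ : Fintype Q := Fintype.ofFinite _
  let q₁ : Q := Quotient.mk'' 1
  let e : ∀ q : Q, q.orbit → (N →* ℂˣ) := fun q x => x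
  have he : ∀ (q : Q) (g : G) (x : q.orbit) (y : N),
      e q (g⁻¹ • x) y = e q x (MulAut.conjNormal g y) := fun q g x y =>
    dualAction_inv_smul N g x y
  have hinj : ∀ q : Q, Function.Injective (e q) := fun q => Subtype.val_injective
  let ρ : ∀ q : Q, Representation ℂ G (q.orbit → ℂ) := fun q => monomialRep N (e q) (he q) n hn
  let χ : Q → G → ℂ := fun q => (ρ q).character
  have hne : ∀ q : Q, Nonempty q.orbit := fun q =>
    Quotient.inductionOn' q fun μ => ⟨⟨μ, MulAction.mem_orbit_self μ⟩⟩
  have hIrr : ∀ q, χ q ∈ Irr G := fun q =>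
    have := monomialRep_isIrreducible N (e q) (he q) n hn (hinj q) hnN
    mem_Irr_of_isIrreducible (ρ q)
  have hdeg : ∀ q, χ q 1 = Nat.card q.orbit := fun q => by
    simp only [χ, Representation.char_one, Module.finrank_fintype_fun_eq_card,
      Nat.card_eq_fintype_card]
  have hχN : ∀ q (y : N), χ q y = ∑ x : q.orbit, ((x : N →* ℂˣ) y : ℂ) := fun q y =>
    monomialRep_character_of_mem N (e q) (he q) n hn (hinj q) hnN y
  have hlin : ∀ (l : G →* ℂˣ) (y : N), l y = 1 := fun l y =>
    Abelianization.commutator_subset_ker l (hNG y.2)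
  have hdeg1 : ∀ q, q ≠ q₁ → χ q 1 ≠ 1 := by
    intro q hq h1
    obtain ⟨l, hl⟩ := exists_lin_of_deg_one (hIrr q) h1
    rw [hdeg] at h1
    have h2 : Nat.card q.orbit = 1 := by exact_mod_cast h1
    obtain ⟨hs, ⟨μ⟩⟩ := Nat.card_eq_one_iff_unique.1 h2
    have h3 : (μ : N →* ℂˣ) = 1 := by
      ext y
      have h4 := hχN q y
      rw [Fintype.sum_subsingleton _ μ, hl] at h4
      simp only [hlin] at h4
      rw [← h4]; rfl
    apply hq
    have h5 := (MulAction.orbitRel.Quotient.mem_orbit).1 μ.2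
    rw [← h5, h3]
  have hstab : ∀ q, twistStab (χ q) ≤ Nat.card q.orbit := by
    intro q
    have h1 : (1 : q.orbit → ℂ) ≠ 0 := by
      intro h
      obtain ⟨x⟩ := hne q
      simpa using congrFun h x
    have h2 : (1 : q.orbit → ℂ) ∈ fixedBy (ρ q) H := by
      intro k hk
      ext x
      rw [monomialRep_apply, hnH k hk]
      simp
    have h3 := twistStab_le_finrank (ρ q) H hsup h1 h2
    rwa [Module.finrank_fintype_fun_eq_card, ← Nat.card_eq_fintype_card] at h3
  have hdis : ∀ (q q' : Q) (l : G →* ℂˣ), χ q' = twist l (χ q) → q = q' := by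
    intro q q' l hl
    have h1 : ∀ y : N, ∑ x : q'.orbit, ((x : N →* ℂˣ) y : ℂ) =
        ∑ x : q.orbit, ((x : N →* ℂˣ) y : ℂ) := by
      intro y
      rw [← hχN, ← hχN, hl, twist_apply, hlin]
      simp
    obtain ⟨⟨μ, hμ⟩⟩ := hne q
    -- the multiplicity of `μ` in the restriction to `N` of the character attached to an orbit
    have h2 : ∀ r : Q, ∑ y : N, (∑ x : r.orbit, ((x : N →* ℂˣ) y : ℂ)) * ((μ y)⁻¹ : ℂˣ).1 =
        if μ ∈ r.orbit then (Nat.card N : ℂ) else 0 := by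
      intro r
      simp_rw [Finset.sum_mul]
      rw [Finset.sum_comm]
      simp_rw [sum_lin_mul_inv N]
      split_ifs with hr
      · rw [Finset.sum_eq_single ⟨μ, hr⟩]
        · simp
        · intro b _ hb
          rw [if_neg]
          intro hb'
          exact hb (Subtype.ext hb')
        · simp
      · refine Finset.sum_eq_zero fun x _ => if_neg ?_
        rintro rfl
        exact hr x.2
    have h3 := h2 q'
    simp_rw [h1] at h3
    rw [h2 q, if_pos hμ] at h3
    have h4 : μ ∈ q'.orbit := by
      by_contra h4
      rw [if_neg h4] at h3
      have : Nat.card N ≠ 0 := Nat.card_pos.ne'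
      exact this (by exact_mod_cast h3)
    rw [MulAction.orbitRel.Quotient.mem_orbit] at hμ h4
    rw [← hμ, ← h4]
  let Ω := {q : Q // q ≠ q₁}
  have hχinj : Function.Injective χ := fun q q' hqq' => hdis q q' 1 (by
    rw [← hqq']; ext; simp)
  have hthree : ∀ ω : Ω, 3 ≤ Nat.card ω.1.orbit := by
    intro ω
    have h1 := three_le_deg hG (hIrr ω.1) (hdeg1 _ ω.2)
    rw [hdeg] at h1
    simp only [Complex.natCast_re] at h1
    exact_mod_cast h1
  have hterm : ∀ ω : Ω, 1 - c / (Nat.card ω.1.orbit : ℝ) ≤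
      ((χ ω.1 1).re - c) / twistStab (χ ω.1) := by
    intro ω
    rw [hdeg, Complex.natCast_re]
    have h0 : (0 : ℝ) < twistStab (χ ω.1) := by exact_mod_cast twistStab_pos _
    have h1 : (twistStab (χ ω.1) : ℝ) ≤ Nat.card ω.1.orbit := by exact_mod_cast hstab ω.1
    have h2 : (3 : ℝ) ≤ Nat.card ω.1.orbit := by exact_mod_cast hthree ω
    have h3 : 1 - c / (Nat.card ω.1.orbit : ℝ) =
        (Nat.card ω.1.orbit - c) / (Nat.card ω.1.orbit : ℝ) := by
      field_simp
    rw [h3]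
    exact div_le_div_of_nonneg_left (by linarith) h0 h1
  refine ⟨Ω, inferInstance, fun ω => Nat.card ω.1.orbit, fun ω => ⟨?_, hthree ω⟩, ?_, ?_,
    fun ω => ?_, fun hp ω => ?_⟩
  · obtain ⟨d, hd, hdo⟩ := exists_odd_deg hG (hIrr ω.1)
    rw [hdeg] at hd
    have : Nat.card ω.1.orbit = d := by exact_mod_cast hd
    change Odd (Nat.card ω.1.orbit)
    rwa [this]
  · have h1 : Nat.card (N →* ℂˣ) = ∑ q : Q, Nat.card q.orbit := by
      rw [Nat.card_congr (MulAction.selfEquivSigmaOrbits' G (N →* ℂˣ)), Nat.card_sigma]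
    have h2 : Nat.card q₁.orbit = 1 := by
      rw [Nat.card_eq_one_iff_unique]
      refine ⟨⟨fun a b => ?_⟩, hne q₁⟩
      have key : ∀ a : q₁.orbit, (a : N →* ℂˣ) = 1 := by
        rintro ⟨a, ha⟩
        obtain ⟨g, rfl⟩ := ha
        ext y
        rfl
      exact Subtype.ext ((key a).trans (key b).symm)
    rw [← hcardD, h1, ← Finset.add_sum_erase _ _ (Finset.mem_univ q₁), h2, add_comm]
    congr 1
    rw [← Finset.sum_subtype (Finset.univ.erase q₁) (p := fun q => q ≠ q₁) (by simp)
      (fun q => Nat.card q.orbit)]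
  · refine lt_of_le_of_lt (Finset.sum_le_sum fun ω _ => hterm ω) ?_
    have h1 := sum_div_twistStab_lt hG hc h (Finset.univ.image fun ω : Ω => χ ω.1) (by
      intro f hf
      obtain ⟨ω, -, rfl⟩ := Finset.mem_image.1 hf
      exact ⟨hIrr _, hdeg1 _ ω.2⟩) (by
      intro f hf f' hf' l hl
      obtain ⟨ω, -, rfl⟩ := Finset.mem_image.1 hf
      obtain ⟨ω', -, rfl⟩ := Finset.mem_image.1 hf'
      rw [hdis _ _ l hl])
    rwa [Finset.sum_image fun a _ b _ hab => Subtype.ext (hχinj hab)] at h1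
  · refine lt_of_le_of_lt ?_ (two_mul_div_twistStab_lt hG hc h (hIrr ω.1) (hdeg1 _ ω.2))
    exact mul_le_mul_of_nonneg_left (hterm ω) (by norm_num)
  · obtain ⟨⟨μ, hμ⟩⟩ := hne ω.1
    have h1 := MulAction.orbitRel.Quotient.mem_orbit.1 hμ
    have h2 : ω.1.orbit = MulAction.orbit G μ := by rw [← h1]; rfl
    change Nat.card ω.1.orbit ∣ _
    rw [h2]
    refine card_orbit_dvd N hp μ ?_
    rintro rfl
    exact ω.2 h1.symm

end OrbitSizes

/-! ### Counting orbits -/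

/-- The arithmetic contradiction: with `s = (p - 1) / 2` and `c = 3 * s / (s + 2)`, an orbit of
size at least `s` violates `htwo`, and if all orbits are smaller there are too many of them. -/
lemma orbit_sizes_absurd {p : ℕ} (hp : p.Prime) (hpodd : Odd p) (hmod : p % 3 = 2)
    (hodd2 : Odd ((p - 1) / 2)) {c : ℝ} (hc : c = 3 * ((p : ℝ) - 1) / ((p : ℝ) + 3))
    {Ω : Type} [Fintype Ω] (d : Ω → ℕ) {m : ℕ} (hm : m ≠ 0) (hd : ∀ ω, Odd (d ω) ∧ 3 ≤ d ω)
    (hsum : ∑ ω, d ω + 1 = p ^ m) (hlt : ∑ ω, (1 - c / d ω) < c - 1)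
    (htwo : ∀ ω, 2 * (1 - c / d ω) < c - 1) (hdvd : m = 1 → ∀ ω, d ω ∣ p - 1) : False := by
  obtain ⟨s, hs⟩ : ∃ s, (p - 1) / 2 = s := ⟨_, rfl⟩
  have hps : p = 2 * s + 1 := by obtain ⟨k, hk⟩ := hpodd; omega
  rw [hs] at hodd2
  have hs5 : 5 ≤ s := by
    obtain ⟨k, hk⟩ := hodd2
    have : k ≠ 0 := by rintro rfl; omega
    have : k ≠ 1 := by rintro rfl; omega
    omega
  have hs5' : (5 : ℝ) ≤ s := by exact_mod_cast hs5
  have hcs : c = 3 * s / (s + 2) := by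
    rw [hc, hps]; push_cast
    rw [div_eq_div_iff (by linarith) (by linarith)]; ring
  have hcs' : c * (s + 2) = 3 * s := by rw [hcs]; field_simp
  have hc3 : c < 3 := by nlinarith
  have hc0 : 0 < c := by rw [hcs]; positivity
  -- every orbit has size less than `s`
  have hds : ∀ ω, d ω < s := by
    intro ω
    by_contra hge
    have hge' : (s : ℝ) ≤ d ω := by exact_mod_cast not_lt.1 hge
    have h1 := htwo ω
    have h2 : c / d ω ≤ c / s := div_le_div_of_nonneg_left hc0.le (by linarith) hge'
    have h3 : c / s * s = c := by field_simp
    have h4 : c * s + 2 * (c / s * s) = 3 * s := by rw [h3]; linarith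
    have h5 : (c + 2 * (c / s)) * s = 3 * s := by linarith
    have h6 : c + 2 * (c / s) = 3 := mul_right_cancel₀ (by linarith) h5
    linarith
  have hbound : ∀ (a k : ℕ), 0 < a → (∀ ω, a ≤ d ω) → k ≤ Fintype.card Ω →
      0 ≤ 1 - c / a → k * (1 - c / a) < c - 1 := by
    intro a k ha had hk h0
    refine lt_of_le_of_lt ?_ hlt
    calc (k : ℝ) * (1 - c / a) ≤ Fintype.card Ω * (1 - c / a) :=
          mul_le_mul_of_nonneg_right (by exact_mod_cast hk) h0
      _ = ∑ ω : Ω, (1 - c / (a : ℝ)) := by simp [mul_sub]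
      _ ≤ _ := by
          refine Finset.sum_le_sum fun ω _ => ?_
          have : c / d ω ≤ c / a :=
            div_le_div_of_nonneg_left hc0.le (by exact_mod_cast ha) (by exact_mod_cast had ω)
          linarith
  have hcard : ∀ b : ℕ, (∀ ω, d ω ≤ b) → p ^ m ≤ Fintype.card Ω * b + 1 := by
    intro b hb
    rw [← hsum]
    have := Finset.sum_le_card_nsmul Finset.univ d b (fun ω _ => hb ω)
    simpa using this
  by_cases hm1 : m = 1
  · have hdvds : ∀ ω, d ω ∣ s := by
      intro ω
      have h1 := hdvd hm1 ω
      have h2 : p - 1 = 2 * s := by omega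
      rw [h2] at h1
      exact (Nat.Coprime.dvd_of_dvd_mul_left
        ((Nat.coprime_two_right).2 (hd ω).1) h1)
    have hle : ∀ ω, 3 * d ω ≤ s := by
      intro ω
      obtain ⟨k, hk⟩ := hdvds ω
      have h1 : Odd k := by rw [hk] at hodd2; exact (Nat.odd_mul.1 hodd2).2
      have h2 : k ≠ 1 := by rintro rfl; have := hds ω; omega
      have h3 : 3 ≤ k := by obtain ⟨j, hj⟩ := h1; omega
      rw [hk, mul_comm]
      exact Nat.mul_le_mul_left _ h3
    have hge5 : ∀ ω, 5 ≤ d ω := by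
      intro ω
      have h1 := hd ω
      -- `3` does not divide `p - 1`, as `p` is congruent to `2` modulo `3`
      have h2 : d ω ≠ 3 := by
        intro h3
        have := hdvds ω
        rw [h3] at this
        omega
      obtain ⟨⟨j, hj⟩, h3⟩ := h1
      omega
    have hk : 6 ≤ Fintype.card Ω := by
      have h1 := hcard (s / 3) (fun ω => by have := hle ω; omega)
      rw [hm1, pow_one, hps] at h1
      by_contra h2
      have h3 : Fintype.card Ω * (s / 3) ≤ 5 * (s / 3) := Nat.mul_le_mul_right _ (by omega)
      omega
    have := hbound 5 6 (by norm_num) hge5 hk (by push_cast; linarith)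
    push_cast at this
    linarith
  · have h2m : 2 ≤ m := by omega
    have h1 := hcard s (fun ω => (hds ω).le)
    have h2 : p ^ 2 ≤ p ^ m := Nat.pow_le_pow_right hp.pos h2m
    have hk : 4 * (s + 1) ≤ Fintype.card Ω := by
      have h3 : p ^ 2 = 4 * (s + 1) * s + 1 := by rw [hps]; ring
      have h4 : 4 * (s + 1) * s ≤ Fintype.card Ω * s := by omega
      exact Nat.le_of_mul_le_mul_right h4 (by omega)
    have h5 := hbound 3 (4 * (s + 1)) (by norm_num) (fun ω => (hd ω).2) hk
      (by push_cast; linarith)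
    push_cast at h5
    have h6 : (1 - c / 3) * (s + 2) = 2 := by linarith
    nlinarith

/-! ### The induction -/

/-- The theorem for all groups of order `k`, by strong induction on `k`. -/
theorem hasNormalPComplement_of_acd_lt {p : ℕ} (hp : p.Prime) (hpodd : Odd p) (hmod : p % 3 = 2)
    (hodd2 : Odd ((p - 1) / 2)) (k : ℕ) : ∀ (G : Type) [Group G] [Fintype G],
    Nat.card G = k → Odd (Nat.card G) → acd G < 3 * ((p : ℝ) - 1) / ((p : ℝ) + 3) →
    HasNormalPComplement G p := by
  classical
  have _ : Fact p.Prime := ⟨hp⟩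
  induction k using Nat.strong_induction_on with
  | _ k ih =>
  intro G _ _ hk hG h
  have hc : 3 * ((p : ℝ) - 1) / ((p : ℝ) + 3) ≤ 3 := by
    rw [div_le_iff₀ (by positivity)]; linarith
  by_cases hcomm : commutator G = ⊥
  · exact hasNormalPComplement_of_commutator_eq_bot hcomm
  have hfin : {N : Subgroup G | N.Normal ∧ N ≠ ⊥ ∧ N ≤ commutator G}.Finite := Set.toFinite _
  obtain ⟨N, ⟨hN, hN0, hNG⟩, hNmin⟩ :=
    hfin.exists_minimal ⟨commutator G, inferInstance, hcomm, le_rfl⟩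
  have hmin : ∀ M : Subgroup G, M.Normal → M ≤ N → M = ⊥ ∨ M = N := fun M hM hMN =>
    or_iff_not_imp_left.2 fun hM0 => le_antisymm hMN (hNmin ⟨hM, hM0, hMN.trans hNG⟩ hMN)
  have hcardN : 1 < Nat.card N := (Subgroup.one_lt_card_iff_ne_bot N).2 hN0
  have hcardGN := N.card_eq_card_quotient_mul_card_subgroup
  have hq : HasNormalPComplement (G ⧸ N) p := by
    refine ih (Nat.card (G ⧸ N)) ?_ (G ⧸ N) rfl ?_ (acd_quotient_lt hG hc h N hNG)
    · rw [← hk, hcardGN]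
      exact lt_mul_of_one_lt_right Nat.card_pos hcardN
    · rw [hcardGN] at hG
      exact (Nat.odd_mul.1 hG).1
  by_cases hpN : p ∣ Nat.card N
  · have hpg := isPGroup_of_minimal hG hc h N hmin hNG hpN
    have hab := isMulCommutative_of_minimal N hmin hN0 hpg
    rcases hasNormalPComplement_or_exists_complement N hmin hpg hq with h1 | ⟨H, hNH, hHN⟩
    · exact h1
    · exfalso
      obtain ⟨m, hm⟩ := IsPGroup.iff_card.1 hpg
      obtain ⟨Ω, _, d, hd, hsum, hlt, htwo, hdvd⟩ :=
        exists_orbit_sizes hG hc h N H hNG hNH hHN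
      refine orbit_sizes_absurd hp hpodd hmod hodd2 rfl d (m := m) ?_ hd (hsum.trans hm) hlt htwo ?_
      · rintro rfl
        rw [hm] at hcardN
        simp at hcardN
      · rintro rfl
        rw [pow_one] at hm
        rw [hm] at hdvd
        exact hdvd hp
  · exact hasNormalPComplement_of_quotient N
      (Nat.Prime.coprime_iff_not_dvd hp |>.2 hpN).symm hq

theorem average_degree_p_nilpotent_two_mod_three_odd
    (G : Type) [Group G] [Fintype G] (hG : Odd (Nat.card G))
    (p : ℕ) (hp : p.Prime) (hpodd : Odd p) (hmod : p % 3 = 2)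
    (hodd2 : Odd ((p - 1) / 2))
    (h : acd G < 3 * ((p : ℝ) - 1) / ((p : ℝ) + 3)) :
    HasNormalPComplement G p :=
  hasNormalPComplement_of_acd_lt hp hpodd hmod hodd2 (Nat.card G) G rfl hG h
end

section
/- Let G be a finite group and let K be a normal subgroup of G with K ∩ G' = 1, where G' is the derived subgroup of G. Then every irreducible complex character φ of K extends to an irreducible character φ̃ of G, and the map sending χ to the product χ·φ̃ is a bijection from the irreducible characters of G/K (inflated to characters of G with K in their kernel) onto the set Irr(G|φ) of irreducible characters of G lying over φ, and this bijection preserves degrees: (χ·φ̃)(1) = χ(1). -/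
open CategoryTheory
open scoped commutatorElement

/-- In degree zero the character vanishes, which violates the norm-one criterion. -/
lemma finrank_ne_zero_of_simple {G : Type} [Group G] [Fintype G] (V : FDRep ℂ G) (hV : Simple V) :
    (Module.finrank ℂ V : ℂ) ≠ 0 := by
  intro h0
  have hdim : Module.finrank ℂ V = 0 := by exact_mod_cast h0
  have hs : Subsingleton V := Module.finrank_zero_iff.mp hdim
  have hchar : ∀ g, V.character g = 0 := fun g => by
    have : V.ρ g = 0 := Subsingleton.elim _ _
    rw [FDRep.character, this, map_zero]
  have h := (FDRep.simple_iff_char_is_norm_one V).mp hV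
  simp only [hchar, mul_zero, Finset.sum_const_zero] at h
  exact Nat.cast_ne_zero.mpr Nat.card_pos.ne' h.symm

/-- Schur's lemma: a central element acts on an irreducible representation by a scalar. -/
lemma exists_scalar_of_central {G : Type} [Group G] [Fintype G] (V : FDRep ℂ G) (hV : Simple V)
    (z : G) (hz : ∀ g, g * z = z * g) :
    ∃ c : ℂ, V.ρ z = c • (1 : Module.End ℂ V) := by
  let f : V ⟶ V := ⟨Action.ρ V z, fun g => by
    have h1 : Action.ρ V (g * z) = Action.ρ V (z * g) := by rw [hz g]
    rw [map_mul, map_mul] at h1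
    exact h1.symm⟩
  obtain ⟨c, hc⟩ := endomorphism_simple_eq_smul_id ℂ f
  refine ⟨c, ?_⟩
  have h2 : f.hom.hom.hom = (c • 𝟙 V : V ⟶ V).hom.hom.hom := by rw [hc]
  exact h2

/-- A group mapping into the center of `G` acts on an irreducible representation of `G` through a
linear character; on characters this says that `χ` restricts to a multiple of it. -/
lemma exists_central_character {G K : Type} [Group G] [Fintype G] [Group K]
    (f : K →* G) (hf : ∀ k g, g * f k = f k * g) (V : FDRep ℂ G) (hV : Simple V) :
    ∃ c : K →* ℂˣ, ∀ k, V.character (f k) = c k * V.character 1 := by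
  have hn := finrank_ne_zero_of_simple V hV
  choose c hc using fun k => exists_scalar_of_central V hV (f k) (hf k)
  have htr : ∀ k, V.character (f k) = c k * (Module.finrank ℂ V : ℂ) := fun k => by
    rw [FDRep.character, hc k, map_smul, LinearMap.trace_one, smul_eq_mul]
  let c' : K →* ℂ :=
    { toFun := c
      map_one' := by
        have h := htr 1
        rw [map_one, FDRep.char_one] at h
        exact mul_right_cancel₀ hn (by rw [← h, one_mul])
      map_mul' := fun a b => by
        have h : V.character (f (a * b)) = c a * c b * (Module.finrank ℂ V : ℂ) := by
          rw [FDRep.character, map_mul, map_mul, hc a, hc b, smul_mul_smul_comm, one_mul,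
            map_smul, LinearMap.trace_one, smul_eq_mul]
        exact mul_right_cancel₀ hn (by rw [← htr, h]) }
  refine ⟨c'.toHomUnits, fun k => ?_⟩
  rw [FDRep.char_one]
  exact htr k

/-- Multiplication by a linear character preserves irreducibility. -/
lemma mul_linear_mem_Irr {G : Type} [Group G] [Fintype G] (μ : G →* ℂˣ) {χ : G → ℂ}
    (hχ : χ ∈ Irr G) : (fun g => χ g * (μ g : ℂ)) ∈ Irr G := by
  obtain ⟨V, hV, rfl⟩ := hχ
  let r : Representation ℂ G V :=
    { toFun := fun g => (μ g : ℂ) • V.ρ g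
      map_one' := by simp
      map_mul' := fun a b => by
        rw [map_mul, map_mul, smul_mul_smul_comm, Units.val_mul] }
  have hr : ∀ g, (FDRep.of r).character g = V.character g * (μ g : ℂ) := fun g => by
    have h : (FDRep.of r).character g = LinearMap.trace ℂ V ((μ g : ℂ) • V.ρ g) := rfl
    rw [h, map_smul, smul_eq_mul, mul_comm]
    rfl
  refine ⟨FDRep.of r, ?_, funext fun g => (hr g).symm⟩
  rw [FDRep.simple_iff_char_is_norm_one] at hV ⊢
  rw [← hV]
  refine Finset.sum_congr rfl fun g _ => ?_
  rw [hr, hr, mul_mul_mul_comm, ← Units.val_mul, ← map_mul, mul_inv_cancel, map_one,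
    Units.val_one, mul_one]

lemma linear_mem_Irr {G : Type} [Group G] [Fintype G] (μ : G →* ℂˣ) :
    (fun g => (μ g : ℂ)) ∈ Irr G := by
  have h1 : (fun _ : G => (1 : ℂ)) ∈ Irr G := by
    have hr : ∀ g, (FDRep.of (1 : Representation ℂ G ℂ)).character g = 1 := fun g => by
      have h : (FDRep.of (1 : Representation ℂ G ℂ)).character g =
        LinearMap.trace ℂ ℂ (1 : Module.End ℂ ℂ) := rfl
      rw [h, LinearMap.trace_one, Module.finrank_self, Nat.cast_one]
    refine ⟨FDRep.of (1 : Representation ℂ G ℂ), ?_, funext fun g => (hr g).symm⟩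
    rw [FDRep.simple_iff_char_is_norm_one]
    simp [hr]
  simpa using mul_linear_mem_Irr μ h1

/-- An irreducible character of a finite abelian group is linear: `K` acts by scalars, so
`χ = χ(1) • c`, and the norm-one condition forces `χ(1) ^ 2 = 1`. -/
lemma exists_linear_of_comm {K : Type} [Group K] [Fintype K] (hcomm : ∀ a b : K, a * b = b * a)
    {φ : K → ℂ} (hφ : φ ∈ Irr K) : ∃ c : K →* ℂˣ, ∀ k, φ k = c k := by
  obtain ⟨V, hV, rfl⟩ := hφ
  obtain ⟨c, hc⟩ := exists_central_character (MonoidHom.id K) (fun k g => hcomm g k) V hV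
  have hc' : ∀ k, V.character k = c k * V.character 1 := hc
  refine ⟨c, fun k => ?_⟩
  have hnorm := (FDRep.simple_iff_char_is_norm_one V).mp hV
  have hterm : ∀ g, V.character g * V.character g⁻¹ = V.character 1 * V.character 1 := fun g => by
    rw [hc' g, hc' g⁻¹, mul_mul_mul_comm, ← Units.val_mul, ← map_mul, mul_inv_cancel, map_one,
      Units.val_one, one_mul]
  simp only [hterm, FDRep.char_one, Finset.sum_const, Finset.card_univ, nsmul_eq_mul,
    Nat.card_eq_fintype_card] at hnorm
  have hsq : Fintype.card K * (Module.finrank ℂ V * Module.finrank ℂ V) = Fintype.card K * 1 := by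
    rw [mul_one]; exact_mod_cast hnorm
  have h1 : Module.finrank ℂ V = 1 :=
    Nat.eq_one_of_mul_eq_one_right (Nat.eq_of_mul_eq_mul_left Fintype.card_pos hsq)
  rw [hc' k, FDRep.char_one, h1, Nat.cast_one, mul_one]

/-- A linear character of a subgroup `K` that embeds in the abelianization of `G` extends
to `G`. -/
lemma exists_extension_linear {G : Type} [Group G] [Fintype G] (K : Subgroup G)
    (hK : K ⊓ commutator G = ⊥) (c : K →* ℂˣ) : ∃ μ : G →* ℂˣ, ∀ x : K, μ x = c x := by
  let f : K →* Abelianization G := Abelianization.of.comp K.subtype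
  have hf : Function.Injective f := by
    rw [injective_iff_map_eq_one]
    intro x hx
    have h1 : (x : G) ∈ commutator G := by
      rw [← Abelianization.ker_of]
      exact hx
    have h2 : (x : G) ∈ K ⊓ commutator G := ⟨x.2, h1⟩
    rw [hK, Subgroup.mem_bot] at h2
    exact Subtype.ext h2
  let e : K ≃* f.range := MonoidHom.ofInjective hf
  have : Finite (Abelianization G) := Quotient.finite _
  have : NeZero (Monoid.exponent (Abelianization G)) := ⟨Monoid.exponent_ne_zero_of_finite⟩
  obtain ⟨ν, hν⟩ := MonoidHom.domRestrict_surjective ℂ f.range (c.comp e.symm.toMonoidHom)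
  refine ⟨ν.comp Abelianization.of, fun x => ?_⟩
  have h := DFunLike.congr_fun hν (e x)
  simp only [MonoidHom.comp_apply, MulEquiv.toMonoidHom_eq_coe, MonoidHom.coe_coe,
    MulEquiv.symm_apply_apply] at h
  rw [← h]
  rfl

lemma conj_linear {K : Type} [Group K] [Finite K] (c : K →* ℂˣ) (k : K) :
    (starRingEnd ℂ) (c k : ℂ) = ((c k)⁻¹ : ℂˣ) := by
  have hpow : (c k : ℂ) ^ Nat.card K = 1 := by
    rw [← Units.val_pow_eq_pow_val, ← map_pow, pow_card_eq_one', map_one, Units.val_one]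
  have hnorm := Complex.norm_eq_one_of_pow_eq_one hpow Nat.card_pos.ne'
  rw [Units.val_inv_eq_inv_val, Complex.inv_eq_conj hnorm]

/-- First orthogonality for linear characters: the inner product is nonzero only if they agree. -/
lemma sum_linear_mul_conj {K : Type} [Group K] [Finite K] (c d : K →* ℂˣ) :
    ∑ᶠ k, (c k : ℂ) * (starRingEnd ℂ) (d k : ℂ) ≠ 0 ↔ c = d := by
  have : Fintype K := Fintype.ofFinite K
  rw [finsum_eq_sum_of_fintype]
  simp only [conj_linear, ← Units.val_mul]
  constructor
  · intro h
    by_contra hne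
    refine h (sum_hom_units_eq_zero ((Units.coeHom ℂ).comp (c * d⁻¹)) fun h1 => hne ?_)
    ext k
    have h2 := DFunLike.congr_fun h1 k
    have h3 : c k * (d k)⁻¹ = 1 := Units.ext h2
    rw [mul_inv_eq_one.mp h3]
  · rintro rfl
    simp

theorem extend_and_bijection_of_trivial_meet_commutator
    (G : Type) [Group G] [Fintype G] (K : Subgroup G) [K.Normal]
    (hK : K ⊓ commutator G = ⊥)
    (φ : K → ℂ) (hφ : φ ∈ Irr K) :
    ∃ φt ∈ Irr G,
      (∀ x : K, φt (x : G) = φ x) ∧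
      (∀ χ ∈ {χ ∈ Irr G | ∀ x : K, χ (x : G) = χ 1},
        (fun g => χ g * φt g) 1 = χ 1) ∧
      Set.BijOn (fun χ : G → ℂ => fun g => χ g * φt g)
        {χ ∈ Irr G | ∀ x : K, χ (x : G) = χ 1}
        {χ ∈ Irr G | ∑ᶠ x : K, χ (x : G) * (starRingEnd ℂ) (φ x) ≠ 0} := by
  have : Fintype K := Fintype.ofFinite K
  have hcent : ∀ (k : K) (g : G), g * K.subtype k = K.subtype k * g := by
    intro k g
    have hk : ⁅g, (k : G)⁆ ∈ K ⊓ commutator G :=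
      ⟨K.mul_mem (‹K.Normal›.conj_mem k k.2 g) (K.inv_mem k.2),
        Subgroup.commutator_mem_commutator (Subgroup.mem_top g) (Subgroup.mem_top (k : G))⟩
    rw [hK, Subgroup.mem_bot, commutatorElement_eq_one_iff_mul_comm] at hk
    exact hk
  obtain ⟨d, hd⟩ := exists_linear_of_comm (fun a b => Subtype.ext (hcent b a)) hφ
  obtain ⟨μ, hμ⟩ := exists_extension_linear K hK d
  -- An irreducible character lies over `φ` exactly when it restricts to a multiple of `d`.
  have hover : ∀ χ ∈ Irr G, (∑ᶠ x : K, χ (x : G) * (starRingEnd ℂ) (φ x) ≠ 0 ↔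
      ∀ x : K, χ x = d x * χ 1) := by
    rintro χ ⟨V, hV, rfl⟩
    obtain ⟨c, hc⟩ := exists_central_character K.subtype hcent V hV
    have hc' : ∀ x : K, V.character x = c x * V.character 1 := hc
    have hn : V.character 1 ≠ 0 := by
      rw [FDRep.char_one]; exact finrank_ne_zero_of_simple V hV
    have hsum : ∑ᶠ x : K, V.character (x : G) * (starRingEnd ℂ) (φ x) =
        V.character 1 * ∑ᶠ x : K, (c x : ℂ) * (starRingEnd ℂ) (d x : ℂ) := by
      rw [finsum_eq_sum_of_fintype, finsum_eq_sum_of_fintype, Finset.mul_sum]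
      refine Finset.sum_congr rfl fun x _ => ?_
      rw [hc', hd]; ring
    rw [hsum, mul_ne_zero_iff, sum_linear_mul_conj, and_iff_right hn]
    constructor
    · rintro rfl
      exact hc'
    · intro h
      ext x
      exact mul_right_cancel₀ hn (by rw [← hc', h])
  refine ⟨fun g => μ g, linear_mem_Irr μ, fun x => by simp [hμ, hd], fun χ _ => by simp, ?_, ?_, ?_⟩
  · rintro χ ⟨hχ, hker⟩
    refine ⟨mul_linear_mem_Irr μ hχ, (hover _ (mul_linear_mem_Irr μ hχ)).mpr fun x => ?_⟩
    simp [hker x, hμ x, mul_comm]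
  · intro χ _ ψ _ h
    funext g
    exact mul_right_cancel₀ (μ g).ne_zero (congrFun h g)
  · rintro ψ ⟨hψ, hne⟩
    have hres := (hover ψ hψ).mp hne
    refine ⟨fun g => ψ g * (μ⁻¹ g : ℂˣ), ⟨mul_linear_mem_Irr μ⁻¹ hψ, fun x => ?_⟩, ?_⟩
    · simp only [MonoidHom.inv_apply, hμ, hres x, map_one, Units.val_one, mul_one]
      rw [mul_right_comm, Units.mul_inv, one_mul]
    · funext g
      simp
end
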